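/- Let A be a σ-unital algebraically simple C*-algebra with strict comparison which is not purely infinite. Suppose e, a ∈ Ped(A⊗K)_+ are contractions such that ω(a) = 0 and d_τ(a) < d_τ(e) for all τ ∈ \overline{QT(A)}^w. Then for any ε > 0 there exists a positive contraction b ∈ Her(e) such that: (1) d_τ(a) − ε < τ(b) ≤ d_τ(a) for all τ ∈ \overline{QT(A)}^w; (2) ω(b) < ε/2; and (3) there exists a positive element e_C ∈ Her(b)^⊥ ∩ Her(e) such that for all τ ∈ \overline{QT(A)}^w: d_τ(e) − d_τ(a) ≤ d_τ(e_C) ≤ sup{τ(c) : c ∈ (Her(b)^⊥ ∩ Her(e))_+, ‖c‖ ≤ 1} < d_τ(e) − d_τ(a) + ε (the supremum equals τ(q), where q is the open projection associated with Her(b)^⊥ ∩ Her(e)). -/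

import Mathlib

open scoped ENNReal
open Filter Topology

noncomputable section

namespace Paper

/-! ### Generic definitions in a (non-unital) C*-algebra -/

variable (R : Type*) [NonUnitalCStarAlgebra R] [PartialOrder R] [StarOrderedRing R]

variable {R} in
/-- The hereditary C*-subalgebra generated by `b`, i.e. `closure (b R b)`. -/
def her (b : R) : Set R := closure {x : R | ∃ y : R, x = b * y * b}

/-- `I` is a (not necessarily closed) two-sided ideal of the subalgebra `B`. -/
def IsIdealIn (B I : Set R) : Prop :=
  I ⊆ B ∧ (0 : R) ∈ I ∧ (∀ x ∈ I, ∀ y ∈ I, x + y ∈ I) ∧ (∀ x ∈ I, -x ∈ I) ∧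
    (∀ x ∈ I, ∀ b ∈ B, x * b ∈ I ∧ b * x ∈ I)

variable {R} in
/-- The Pedersen ideal of the subalgebra `B`: the minimal dense two-sided ideal of `B`,
equivalently the intersection of all dense two-sided ideals of `B`. -/
def pedersenIn (B : Set R) : Set R :=
  ⋂ I ∈ {I : Set R | IsIdealIn R B I ∧ B ⊆ closure I}, I

/-- The Pedersen ideal of `R`. -/
def pedersen : Set R := pedersenIn (Set.univ : Set R)

variable {R} in
/-- Cuntz subequivalence `a ≲ b`. -/
def CuntzLE (a b : R) : Prop :=
  ∃ x : ℕ → R, Tendsto (fun n => ‖a - star (x n) * b * x n‖) atTop (𝓝 0)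

variable {R} in
/-- Cuntz subequivalence relative to a subset `B` (the `xₙ` are taken in `B`). -/
def CuntzLEIn (B : Set R) (a b : R) : Prop :=
  ∃ x : ℕ → R, (∀ n, x n ∈ B) ∧ Tendsto (fun n => ‖a - star (x n) * b * x n‖) atTop (𝓝 0)

variable {R} in
/-- Cuntz equivalence `a ∼ b`. -/
def CuntzEq (a b : R) : Prop := CuntzLE a b ∧ CuntzLE b a

/-- The cut-off function `f_ε`: `0` on `[0, ε/2]`, `1` on `[ε, ∞)`, linear in between. -/
def cutoff (ε : ℝ) : ℝ → ℝ := fun t => min 1 (max 0 (2 * t / ε - 1))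

variable {R} in
/-- `f_ε(a)`, via the (non-unital) continuous functional calculus. -/
def fEps (ε : ℝ) (a : R) : R := cfcₙ (cutoff ε) a

/-- A densely defined 2-quasitrace on `R` (recorded by its values on positive elements;
the value on non-positive elements is normalised to `0`). -/
structure QuasiTrace : Type _ where
  toFun : R → ℝ≥0∞
  zero_of_not_nonneg : ∀ a : R, ¬ (0 ≤ a) → toFun a = 0
  map_zero : toFun 0 = 0
  map_smul : ∀ (r : ℝ) (a : R), 0 < r → 0 ≤ a → toFun (r • a) = ENNReal.ofReal r * toFun a
  map_add_of_commute : ∀ a b : R, 0 ≤ a → 0 ≤ b → a * b = b * a →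
    toFun (a + b) = toFun a + toFun b
  map_star_mul_self : ∀ x : R, toFun (star x * x) = toFun (x * star x)
  lowerSemicontinuousOn : LowerSemicontinuousOn toFun {a : R | 0 ≤ a}
  finite_on_pedersen : ∀ a ∈ pedersen R, 0 ≤ a → toFun a < ∞
  exists_matrix_extension : ∃ σ : Matrix (Fin 2) (Fin 2) R → ℝ≥0∞,
    (∀ a : R, σ (fun i j => if i = 0 ∧ j = 0 then a else 0) = toFun a) ∧
    σ 0 = 0 ∧
    (∀ (r : ℝ) (x : Matrix (Fin 2) (Fin 2) R), 0 < r → (∃ y, x = star y * y) →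
      σ (r • x) = ENNReal.ofReal r * σ x) ∧
    (∀ x y : Matrix (Fin 2) (Fin 2) R, (∃ z, x = star z * z) → (∃ z, y = star z * z) →
      x * y = y * x → σ (x + y) = σ x + σ y) ∧
    (∀ x : Matrix (Fin 2) (Fin 2) R, σ (star x * x) = σ (x * star x))

/-- The topology of pointwise convergence on the Pedersen ideal. -/
instance : TopologicalSpace (QuasiTrace R) :=
  TopologicalSpace.induced (fun τ => fun a : pedersen R => τ.toFun a) inferInstance

variable {R}

/-- The zero quasitrace. -/
def QuasiTrace.IsZero (τ : QuasiTrace R) : Prop := ∀ a : R, τ.toFun a = 0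

/-- The dimension function `d_τ(a) = lim_{ε → 0} τ(f_ε(a))`. -/
def dTau (τ : QuasiTrace R) (a : R) : ℝ≥0∞ :=
  ⨆ n : ℕ, τ.toFun (fEps (1 / (n + 1)) a)

/-- `ω(a)` relative to a set `S` of quasitraces:
`lim_n sup {d_τ(a) - τ(f_{1/n}(a)) : τ ∈ S}`. -/
def omegaOn (S : Set (QuasiTrace R)) (a : R) : ℝ≥0∞ :=
  ⨅ n : ℕ, ⨆ τ ∈ S, (dTau τ a - τ.toFun (fEps (1 / (n + 1)) a))

/-- The seminorm `‖x‖_{2,S}`. -/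
def norm2On (S : Set (QuasiTrace R)) (x : R) : ℝ≥0∞ :=
  ⨆ τ ∈ S, (τ.toFun (star x * x)) ^ (1 / 2 : ℝ)

variable (R)

/-- `R` has (Blackadar's) strict comparison. -/
def StrictComparison : Prop :=
  ∀ a b : R, 0 ≤ a → 0 ≤ b →
    (∀ τ : QuasiTrace R, ¬ τ.IsZero → dTau τ a < dTau τ b) → CuntzLE a b

/-- `R` is a simple C*-algebra: it is nonzero and has no nontrivial closed two-sided ideals. -/
def IsSimpleCStar : Prop :=
  (∃ x : R, x ≠ 0) ∧
    ∀ I : TwoSidedIdeal R, IsClosed (I : Set R) → (I : Set R) = {0} ∨ (I : Set R) = Set.univ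

/-- `R` is σ-unital: it contains a strictly positive element `h`
(equivalently, `Her(h) = R`). -/
def SigmaUnital : Prop := ∃ h : R, 0 ≤ h ∧ her h = Set.univ

/-- `R` is elementary: isomorphic to the algebra of compact operators on some Hilbert space. -/
def IsElementary : Prop :=
  ∃ (H : Type) (_ : NormedAddCommGroup H) (_ : InnerProductSpace ℂ H) (_ : CompleteSpace H)
    (φ : R →⋆ₙₐ[ℂ] (H →L[ℂ] H)), Function.Injective φ ∧
      Set.range φ = {T : H →L[ℂ] H | IsCompactOperator (⇑T)}

/-- `R` is purely infinite: `R ≇ ℂ` and `b ≲ a` for all nonzero positive `a, b`. -/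
def PurelyInfinite : Prop :=
  (¬ ∃ φ : R →⋆ₙₐ[ℂ] ℂ, Function.Bijective φ) ∧
    ∀ a b : R, 0 ≤ a → 0 ≤ b → a ≠ 0 → b ≠ 0 → CuntzLE b a

/-- `R` is finite: its minimal unitization contains no non-unitary isometry. -/
def IsFiniteCStar : Prop :=
  ∀ v : Unitization ℂ R, star v * v = 1 → v * star v = 1

/-- `R` has stable rank one: the invertible elements are dense in the minimal unitization. -/
def StableRankOne : Prop := Dense {x : Unitization ℂ R | IsUnit x}

variable {R}

/-- `c` represents `n·[a]` in the Cuntz semigroup: it is the sum of `n` mutually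
orthogonal positive elements, each Cuntz equivalent to `a`. -/
def IsNFoldRep (n : ℕ) (a c : R) : Prop :=
  ∃ f : Fin n → R, (∀ i, 0 ≤ f i) ∧ (∀ i, CuntzEq (f i) a) ∧
    (∀ i j, i ≠ j → f i * f j = 0) ∧ c = ∑ i, f i

/-- `s` represents the supremum of the increasing sequence of Cuntz classes `[y n]`. -/
def IsCuntzLUB (y : ℕ → R) (s : R) : Prop :=
  (∀ n, CuntzLE (y n) s) ∧ ∀ c : R, 0 ≤ c → (∀ n, CuntzLE (y n) c) → CuntzLE s c

/-- `[x] ≪ [y]` in the Cuntz semigroup. -/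
def CuntzWayBelow (x y : R) : Prop :=
  ∀ yseq : ℕ → R, (∀ n, 0 ≤ yseq n) → (∀ n, CuntzLE (yseq n) (yseq (n + 1))) →
    ∀ s : R, 0 ≤ s → IsCuntzLUB yseq s → CuntzLE y s → ∃ n₀, CuntzLE x (yseq n₀)

variable (R)

/-- The Cuntz semigroup of `R` is almost unperforated. -/
def AlmostUnperforated : Prop :=
  ∀ (a b : R) (k : ℕ), 1 ≤ k → 0 ≤ a → 0 ≤ b →
    (∃ c d : R, IsNFoldRep (k + 1) a c ∧ IsNFoldRep k b d ∧ CuntzLE c d) → CuntzLE a b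

/-- The Cuntz semigroup of `R` is almost divisible. -/
def AlmostDivisible : Prop :=
  ∀ x y : R, 0 ≤ x → 0 ≤ y → CuntzWayBelow x y → ∀ n : ℕ, 1 ≤ n →
    ∃ z : R, 0 ≤ z ∧ (∃ c : R, IsNFoldRep n z c ∧ CuntzLE c y) ∧
      (∃ c : R, IsNFoldRep (n + 1) z c ∧ CuntzLE x c)

/-! ### The stabilization `W ≅ A ⊗ K` -/

variable (A W : Type*) [NonUnitalCStarAlgebra A] [PartialOrder A] [StarOrderedRing A]
  [NonUnitalCStarAlgebra W] [PartialOrder W] [StarOrderedRing W]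

/-- A realization of `W` as the stabilization `A ⊗ K`: the maps `emb i j : a ↦ a ⊗ e_{ij}`
are isometric, satisfy the matrix-unit relations, and have dense joint linear span. -/
structure Stabilization : Type _ where
  emb : ℕ → ℕ → (A →ₗ[ℂ] W)
  emb_mul : ∀ (i j k l : ℕ) (a b : A),
    emb i j a * emb k l b = if j = k then emb i l (a * b) else 0
  emb_star : ∀ (i j : ℕ) (a : A), star (emb i j a) = emb j i (star a)
  norm_emb : ∀ (i j : ℕ) (a : A), ‖emb i j a‖ = ‖a‖
  dense_span : Dense (Submodule.span ℂ {w : W | ∃ (i j : ℕ) (a : A), w = emb i j a} : Set W)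

variable {A W}

/-- The set `QT(A)` of quasitraces normalized on `A ⊆ A ⊗ K`. -/
def QTSet (SB : Stabilization A W) : Set (QuasiTrace W) :=
  {τ | (⨆ a : {a : A // 0 ≤ a ∧ ‖a‖ ≤ 1}, τ.toFun (SB.emb 0 0 a)) = 1}

/-- The quasitraces normalized on the hereditary subalgebra `Her(c) ⊆ W`. -/
def QTSetHer (c : W) : Set (QuasiTrace W) :=
  {τ : QuasiTrace W |
    (⨆ a : {a : W // a ∈ her c ∧ 0 ≤ a ∧ ‖a‖ ≤ 1}, τ.toFun a) = 1}

/-- `ω(a) = 0` for `a ∈ W = A ⊗ K`, computed relative to `\overline{QT(Her(e))}^w`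
for any nonzero `e ∈ Ped(A)₊`. -/
def OmegaZero (SB : Stabilization A W) (a : W) : Prop :=
  ∀ e : A, 0 ≤ e → e ≠ 0 → e ∈ pedersen A →
    omegaOn (closure (QTSetHer (SB.emb 0 0 e))) a = 0

/-- `A` has tracial approximate oscillation zero. -/
def TAOZ (SB : Stabilization A W) : Prop :=
  ∀ e : A, 0 ≤ e → e ≠ 0 → e ∈ pedersen A →
    ∀ a : W, 0 ≤ a → a ∈ pedersen W →
      ∃ b : ℕ → W, (∀ n, 0 ≤ b n) ∧ (∀ n, ‖b n‖ ≤ 1) ∧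
        (∀ n, b n ∈ pedersenIn (her a)) ∧
        Tendsto (fun n => omegaOn (closure (QTSetHer (SB.emb 0 0 e))) (b n)) atTop (𝓝 0) ∧
        Tendsto (fun n => norm2On (closure (QTSetHer (SB.emb 0 0 e))) (a - b n)) atTop (𝓝 0)

/-! ### Affine functions on the quasitrace cone and the map `Γ` -/

variable (W) in
/-- `ρ = t·τ + (1-t)·σ` as quasitraces. -/
def IsCombo (t : ℝ) (τ σ ρ : QuasiTrace W) : Prop :=
  ∀ a : W, 0 ≤ a →
    ρ.toFun a = ENNReal.ofReal t * τ.toFun a + ENNReal.ofReal (1 - t) * σ.toFun a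

variable (W) in
/-- `f` is affine on the quasitrace cone. -/
def IsAffineQT (f : QuasiTrace W → ℝ≥0∞) : Prop :=
  ∀ t : ℝ, 0 ≤ t → t ≤ 1 → ∀ τ σ ρ : QuasiTrace W, IsCombo W t τ σ ρ →
    f ρ = ENNReal.ofReal t * f τ + ENNReal.ofReal (1 - t) * f σ

variable (W) in
/-- Membership in `Aff₊(QT̃(A))`. -/
def MemAffPlus (f : QuasiTrace W → ℝ≥0∞) : Prop :=
  (∀ τ, f τ = 0) ∨
    (Continuous f ∧ IsAffineQT W f ∧ (∀ τ, f τ < ∞) ∧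
      (∀ τ : QuasiTrace W, ¬ τ.IsZero → 0 < f τ) ∧
      (∀ τ : QuasiTrace W, τ.IsZero → f τ = 0))

variable (W) in
/-- Membership in `LAff₊(QT̃(A))`. -/
def MemLAffPlus (f : QuasiTrace W → ℝ≥0∞) : Prop :=
  ∃ g : ℕ → QuasiTrace W → ℝ≥0∞, (∀ n, MemAffPlus W (g n)) ∧
    (∀ n τ, g n τ ≤ g (n + 1) τ) ∧ ∀ τ, f τ = ⨆ n, g n τ

variable (W) in
/-- The canonical map `Γ : Cu(A) → LAff₊(QT̃(A))`, `Γ([a])(τ) = d_τ(a)`, is surjective. -/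
def GammaSurjective : Prop :=
  ∀ f : QuasiTrace W → ℝ≥0∞, MemLAffPlus W f →
    ∃ a : W, 0 ≤ a ∧ ∀ τ : QuasiTrace W, dTau τ a = f τ


/-- The orthogonal complement `C^⊥ = {x : x·c = c·x = 0 for all c ∈ C}` of a subset `C ⊆ W`. -/
def perp (C : Set W) : Set W := {x : W | ∀ c ∈ C, x * c = 0 ∧ c * x = 0}

/-- `τ(q)` for the open projection `q` associated with the hereditary subalgebra `B`:
the supremum of `τ` over the positive contractions of `B`. -/
def tauOpenProj (τ : QuasiTrace W) (B : Set W) : ℝ≥0∞ :=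
  ⨆ c : {c : W // c ∈ B ∧ 0 ≤ c ∧ ‖c‖ ≤ 1}, τ.toFun c

set_option linter.unusedSectionVars false


section Generic

variable {B : Type*} [NonUnitalCStarAlgebra B] [PartialOrder B] [StarOrderedRing B]

lemma cutoff_zero (ε : ℝ) : cutoff ε 0 = 0 := by simp [cutoff]

lemma cutoff_cont (ε : ℝ) : Continuous (cutoff ε) := by unfold cutoff; fun_prop

lemma cutoff_nonneg (ε t : ℝ) : 0 ≤ cutoff ε t := by simp [cutoff]

lemma cutoff_le_one (ε t : ℝ) : cutoff ε t ≤ 1 := by simp [cutoff]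

lemma cutoff_eq_zero {ε t : ℝ} (hε : 0 < ε) (h : t ≤ ε / 2) : cutoff ε t = 0 := by
  have : 2 * t / ε - 1 ≤ 0 := by
    rw [sub_nonpos, div_le_one hε]; linarith
  simp [cutoff, max_eq_left this]

lemma cutoff_eq_one {ε t : ℝ} (hε : 0 < ε) (h : ε ≤ t) : cutoff ε t = 1 := by
  have : 1 ≤ 2 * t / ε - 1 := by
    rw [le_sub_iff_add_le, le_div_iff₀ hε]; linarith
  simp [cutoff, this]

lemma lt_of_cutoff_ne_zero {ε t : ℝ} (hε : 0 < ε) (h : cutoff ε t ≠ 0) : ε / 2 < t := by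
  by_contra hc
  exact h (cutoff_eq_zero hε (not_lt.mp hc))

lemma cutoff_mul_half {ε : ℝ} (hε : 0 < ε) (t : ℝ) :
    cutoff ε t * cutoff (ε / 2) t = cutoff ε t := by
  by_cases h : cutoff ε t = 0
  · simp [h]
  · rw [cutoff_eq_one (by positivity) (lt_of_cutoff_ne_zero hε h).le, mul_one]

lemma fEps_nonneg (ε : ℝ) (a : B) : 0 ≤ fEps ε a :=
  cfcₙ_nonneg fun x _ => cutoff_nonneg ε x

lemma fEps_star (ε : ℝ) (a : B) : star (fEps ε a) = fEps ε a :=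
  (IsSelfAdjoint.of_nonneg (fEps_nonneg ε a)).star_eq

lemma fEps_norm (ε : ℝ) (a : B) : ‖fEps ε a‖ ≤ 1 := by
  apply norm_cfcₙ_le
  intro x _
  rw [Real.norm_of_nonneg (cutoff_nonneg _ _)]
  exact cutoff_le_one _ _

lemma cfcn_star (f : ℝ → ℝ) (a : B) : star (cfcₙ f a) = cfcₙ f a :=
  (cfcₙ_predicate f a : IsSelfAdjoint _).star_eq

lemma cfcn_id {p : B} (hp : 0 ≤ p) : cfcₙ (fun t : ℝ => t) p = p :=
  cfcₙ_id' ℝ p (IsSelfAdjoint.of_nonneg hp)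

lemma intertwine_poly {z p q : B} (hp : 0 ≤ p) (hq : 0 ≤ q) (h : z * p = q * z)
    (Q : Polynomial ℝ) :
    z * cfcₙ (fun t : ℝ => Q.eval t * t) p = cfcₙ (fun t : ℝ => Q.eval t * t) q * z := by
  induction Q using Polynomial.induction_on with
  | C c =>
    simp only [Polynomial.eval_C]
    rw [cfcₙ_const_mul c (fun t : ℝ => t) p, cfcₙ_const_mul c (fun t : ℝ => t) q,
      cfcn_id hp, cfcn_id hq, mul_smul_comm, smul_mul_assoc, h]
  | add P Q hP hQ =>
    simp only [Polynomial.eval_add, add_mul]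
    rw [cfcₙ_add (fun t : ℝ => P.eval t * t) (fun t : ℝ => Q.eval t * t) p,
      cfcₙ_add (fun t : ℝ => P.eval t * t) (fun t : ℝ => Q.eval t * t) q, mul_add, add_mul, hP, hQ]
  | monomial n c ih =>
    have hfun : (fun t : ℝ => (Polynomial.C c * Polynomial.X ^ (n + 1)).eval t * t) =
        fun t : ℝ => ((Polynomial.C c * Polynomial.X ^ n).eval t * t) * t := by
      funext t
      simp only [Polynomial.eval_mul, Polynomial.eval_C, Polynomial.eval_pow, Polynomial.eval_X]
      ring
    rw [hfun]
    generalize Polynomial.C c * Polynomial.X ^ n = R at ih ⊢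
    rw [cfcₙ_mul (fun t : ℝ => Polynomial.eval t R * t) (fun t : ℝ => t) p,
      cfcₙ_mul (fun t : ℝ => Polynomial.eval t R * t) (fun t : ℝ => t) q,
      cfcn_id hp, cfcn_id hq, ← mul_assoc, ih, mul_assoc, h, mul_assoc]

lemma quasispec_mem {p : B} (hp : 0 ≤ p) {t : ℝ} (ht : t ∈ quasispectrum ℝ p) :
    t ∈ Set.Icc 0 ‖p‖ := by
  have h0 := quasispectrum_nonneg_of_nonneg p hp t ht
  have h1 := NonUnitalIsometricContinuousFunctionalCalculus.norm_quasispectrum_le (𝕜 := ℝ) p ht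
    (IsSelfAdjoint.of_nonneg hp)
  rw [Real.norm_of_nonneg h0] at h1
  exact ⟨h0, h1⟩

lemma intertwine {z p q : B} (hp : 0 ≤ p) (hq : 0 ≤ q) (h : z * p = q * z)
    (f : ℝ → ℝ) (hf : Continuous f) (h0 : f 0 = 0) :
    z * cfcₙ f p = cfcₙ f q * z := by
  rw [← sub_eq_zero, ← norm_le_zero_iff]
  apply le_of_forall_pos_le_add
  intro η hη
  set M := max ‖p‖ ‖q‖ with hM
  set δ : ℝ := η / (4 * (‖z‖ + 1)) with hδ
  have hδ0 : 0 < δ := by positivity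
  obtain ⟨P, hP⟩ := exists_polynomial_near_of_continuousOn 0 M f hf.continuousOn δ hδ0
  set g : ℝ → ℝ := fun t => P.divX.eval t * t with hg
  have hgP : ∀ t, g t = P.eval t - P.eval 0 := by
    intro t
    have := congrArg (Polynomial.eval t) (Polynomial.divX_mul_X_add P)
    simp only [Polynomial.eval_add, Polynomial.eval_mul, Polynomial.eval_X,
      Polynomial.eval_C] at this
    rw [← this, ← Polynomial.coeff_zero_eq_eval_zero]; simp [hg]
  have hgc : Continuous g := by rw [hg]; fun_prop
  have hg0 : g 0 = 0 := by simp [hg]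
  have key : ∀ t ∈ Set.Icc 0 M, ‖f t - g t‖ ≤ 2 * δ := by
    intro t ht
    have h1 := (hP t ht).le
    have h2 := (hP 0 ⟨le_rfl, ht.1.trans ht.2⟩).le
    rw [h0] at h2
    rw [hgP, Real.norm_eq_abs]
    rw [abs_le] at *
    constructor <;> linarith [h1.1, h1.2, h2.1, h2.2]
  have kp : ‖cfcₙ f p - cfcₙ g p‖ ≤ 2 * δ := by
    rw [← cfcₙ_sub f g p hf.continuousOn h0 hgc.continuousOn hg0]
    apply norm_cfcₙ_le
    intro t ht
    have := quasispec_mem hp ht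
    exact key t ⟨this.1, this.2.trans (le_max_left _ _)⟩
  have kq : ‖cfcₙ f q - cfcₙ g q‖ ≤ 2 * δ := by
    rw [← cfcₙ_sub f g q hf.continuousOn h0 hgc.continuousOn hg0]
    apply norm_cfcₙ_le
    intro t ht
    have := quasispec_mem hq ht
    exact key t ⟨this.1, this.2.trans (le_max_right _ _)⟩
  have e1 : z * cfcₙ f p - cfcₙ f q * z =
      z * (cfcₙ f p - cfcₙ g p) - (cfcₙ f q - cfcₙ g q) * z := by
    rw [mul_sub, sub_mul, intertwine_poly hp hq h]; abel
  rw [e1, zero_add]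
  calc _ ≤ ‖z‖ * ‖cfcₙ f p - cfcₙ g p‖ + ‖cfcₙ f q - cfcₙ g q‖ * ‖z‖ :=
        (norm_sub_le _ _).trans (add_le_add (norm_mul_le _ _) (norm_mul_le _ _))
    _ ≤ ‖z‖ * (2 * δ) + (2 * δ) * ‖z‖ := by gcongr
    _ = 4 * ‖z‖ * δ := by ring
    _ ≤ 4 * (‖z‖ + 1) * δ := by gcongr; linarith
    _ = η := by rw [hδ]; field_simp

end Generic

section Generic2

variable {B : Type*} [NonUnitalCStarAlgebra B] [PartialOrder B] [StarOrderedRing B]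

/-- `f_{1/(n+1)}(h) z → z`. -/
def LA (h z : B) : Prop :=
  Tendsto (fun n : ℕ => fEps (1 / ((n : ℝ) + 1)) h * z) atTop (𝓝 z)

lemma LA_iff {h z : B} :
    LA h z ↔ Tendsto (fun n : ℕ => ‖fEps (1 / ((n : ℝ) + 1)) h * z - z‖) atTop (𝓝 0) :=
  tendsto_iff_norm_sub_tendsto_zero

lemma cutoff_mul_id_bound {ε t : ℝ} (hε : 0 < ε) (ht : 0 ≤ t) : ‖cutoff ε t * t - t‖ ≤ ε := by
  have h1 := cutoff_le_one ε t
  have h0 := cutoff_nonneg ε t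
  rw [Real.norm_eq_abs, abs_le]
  by_cases h : ε ≤ t
  · rw [cutoff_eq_one hε h]; constructor <;> linarith
  · push Not at h
    constructor <;> nlinarith

lemma LA_self {h : B} (hh : 0 ≤ h) : LA h h := by
  rw [LA_iff]
  refine squeeze_zero (fun _ => norm_nonneg _) (fun n => ?_)
    (tendsto_one_div_add_atTop_nhds_zero_nat (𝕜 := ℝ))
  set ε : ℝ := 1 / ((n : ℝ) + 1) with hε
  have hε0 : 0 < ε := by positivity
  have hc := cutoff_cont ε
  have h0 := cutoff_zero ε
  have e1 : fEps ε h * h - h = cfcₙ (fun t : ℝ => cutoff ε t * t - t) h := by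
    rw [cfcₙ_sub (fun t : ℝ => cutoff ε t * t) (fun t : ℝ => t) h,
      cfcₙ_mul (cutoff ε) (fun t : ℝ => t) h, cfcn_id hh, fEps]
  rw [e1]
  exact norm_cfcₙ_le fun t ht => cutoff_mul_id_bound hε0 (quasispec_mem hh ht).1

lemma LA.mul {h z : B} (hz : LA h z) (w : B) : LA h (z * w) := by
  have := Tendsto.mul_const w hz
  simpa only [LA, mul_assoc] using this

lemma LA.add {h z w : B} (hz : LA h z) (hw : LA h w) : LA h (z + w) := by
  have := Tendsto.add hz hw
  simpa only [LA, mul_add] using this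

lemma LA.sub {h z w : B} (hz : LA h z) (hw : LA h w) : LA h (z - w) := by
  have := Tendsto.sub hz hw
  simpa only [LA, mul_sub] using this

lemma LA.of_le {h d z : B} (hd : LA h d) (hz : z * star z ≤ d) : LA h z := by
  rw [LA_iff] at hd ⊢
  have key : ∀ n : ℕ, ‖fEps (1 / ((n : ℝ) + 1)) h * z - z‖ ≤
      Real.sqrt (2 * ‖fEps (1 / ((n : ℝ) + 1)) h * d - d‖) := by
    intro n
    apply Real.le_sqrt_of_sq_le
    set f := fEps (1 / ((n : ℝ) + 1)) h with hf
    have hfs : star f = f := fEps_star _ _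
    have hfn : ‖f‖ ≤ 1 := fEps_norm _ _
    obtain ⟨v, hv⟩ := CStarAlgebra.nonneg_iff_eq_star_mul_self.mp (sub_nonneg.mpr hz)
    have hd' : d = z * star z + star v * v := by rw [← hv]; abel
    have e1 : (f * d - d) * f - (f * d - d) =
        (f * z - z) * star (f * z - z) + star (v * f - v) * (v * f - v) := by
      rw [hd']
      simp only [star_sub, star_mul, hfs]
      noncomm_ring
    have e2 : (f * z - z) * star (f * z - z) ≤ (f * d - d) * f - (f * d - d) := by
      rw [e1]; exact le_add_of_nonneg_right (star_mul_self_nonneg _)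
    have e3 := CStarAlgebra.norm_le_norm_of_nonneg_of_le (mul_star_self_nonneg (f * z - z)) e2
    rw [CStarRing.norm_self_mul_star] at e3
    calc ‖f * z - z‖ ^ 2 = ‖f * z - z‖ * ‖f * z - z‖ := sq _
      _ ≤ ‖(f * d - d) * f - (f * d - d)‖ := e3
      _ ≤ ‖f * d - d‖ * ‖f‖ + ‖f * d - d‖ :=
        (norm_sub_le _ _).trans (by gcongr; exact norm_mul_le _ _)
      _ ≤ ‖f * d - d‖ * 1 + ‖f * d - d‖ := by gcongr
      _ = 2 * ‖f * d - d‖ := by ring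
  refine squeeze_zero (fun _ => norm_nonneg _) key ?_
  have := (hd.const_mul 2).sqrt
  simpa using this

lemma LA.of_mul_star {h z : B} (hz : LA h (z * star z)) : LA h z := hz.of_le le_rfl

lemma LA_mul_star (z : B) : LA (z * star z) z := (LA_self (mul_star_self_nonneg z)).of_mul_star

lemma LA_star_mul (z : B) : LA (star z * z) (star z) := by
  simpa using LA_mul_star (star z)

/-- `f_ε(t)/t`. -/
def cutdiv (ε : ℝ) (t : ℝ) : ℝ := cutoff ε t / max t (ε / 2)

lemma cutdiv_cont {ε : ℝ} (hε : 0 < ε) : Continuous (cutdiv ε) := by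
  unfold cutdiv
  refine (cutoff_cont ε).div (by fun_prop) fun t => ?_
  have : ε / 2 ≤ max t (ε / 2) := le_max_right _ _
  linarith

lemma cutdiv_zero (ε : ℝ) : cutdiv ε 0 = 0 := by simp [cutdiv, cutoff_zero]

lemma cutdiv_nonneg {ε : ℝ} (hε : 0 < ε) (t : ℝ) : 0 ≤ cutdiv ε t := by
  have : ε / 2 ≤ max t (ε / 2) := le_max_right _ _
  exact div_nonneg (cutoff_nonneg _ _) (by linarith)

lemma cutdiv_mul {ε : ℝ} (hε : 0 < ε) (t : ℝ) : cutdiv ε t * t = cutoff ε t := by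
  by_cases h : cutoff ε t = 0
  · simp [cutdiv, h]
  · have := lt_of_cutoff_ne_zero hε h
    rw [cutdiv, max_eq_left this.le]
    have : t ≠ 0 := by linarith
    field_simp

lemma fEps_factor {ε : ℝ} (hε : 0 < ε) {h : B} (hh : 0 ≤ h) :
    fEps ε h = cfcₙ (cutdiv ε) h * h ∧ fEps ε h = h * cfcₙ (cutdiv ε) h := by
  have hc := cutdiv_cont hε
  have h0 := cutdiv_zero ε
  have e1 : fEps ε h = cfcₙ (cutdiv ε) h * h := by
    have e0 : cfcₙ (fun t : ℝ => cutdiv ε t * t) h = cfcₙ (cutdiv ε) h * h := by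
      rw [cfcₙ_mul (cutdiv ε) (fun t : ℝ => t) h, cfcn_id hh]
    rw [← e0, fEps]
    congr 1; funext t; exact (cutdiv_mul hε t).symm
  refine ⟨e1, ?_⟩
  have := congrArg star e1
  rwa [fEps_star, star_mul, cfcn_star, (IsSelfAdjoint.of_nonneg hh).star_eq] at this

lemma eps_pos (n : ℕ) : 0 < 1 / ((n : ℝ) + 1) := by positivity

lemma LA.tendsto_conj {h y : B} (h1 : LA h y) (h2 : LA h (star y)) :
    Tendsto (fun n : ℕ => fEps (1 / ((n : ℝ) + 1)) h * y * fEps (1 / ((n : ℝ) + 1)) h)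
      atTop (𝓝 y) := by
  have h3 : Tendsto (fun n : ℕ => y * fEps (1 / ((n : ℝ) + 1)) h) atTop (𝓝 y) := by
    have := Filter.Tendsto.star h2
    simpa [fEps_star] using this
  rw [tendsto_iff_norm_sub_tendsto_zero] at h3 ⊢
  rw [LA_iff] at h1
  have h4 := h1.add h3
  rw [add_zero] at h4
  refine squeeze_zero (fun _ => norm_nonneg _) (fun n => ?_) h4
  set f := fEps (1 / ((n : ℝ) + 1)) h
  have hfn : ‖f‖ ≤ 1 := fEps_norm _ _
  calc ‖f * y * f - y‖ = ‖(f * y - y) * f + (y * f - y)‖ := by congr 1; noncomm_ring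
    _ ≤ ‖f * y - y‖ * ‖f‖ + ‖y * f - y‖ :=
      (norm_add_le _ _).trans (by gcongr; exact norm_mul_le _ _)
    _ ≤ ‖f * y - y‖ * 1 + ‖y * f - y‖ := by gcongr
    _ = _ := by rw [mul_one]

lemma mem_her {h y : B} (hh : 0 ≤ h) (h1 : LA h y) (h2 : LA h (star y)) : y ∈ her h := by
  refine mem_closure_of_tendsto (h1.tendsto_conj h2) (Eventually.of_forall fun n => ?_)
  obtain ⟨e1, e2⟩ := fEps_factor (eps_pos n) hh
  refine ⟨cfcₙ (cutdiv (1 / ((n : ℝ) + 1))) h * y * cfcₙ (cutdiv (1 / ((n : ℝ) + 1))) h, ?_⟩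
  nth_rewrite 1 [e2]
  rw [e1]
  simp only [mul_assoc]

lemma LA_of_her {h y : B} (hh : 0 ≤ h) (hy : y ∈ her h) : LA h y := by
  rw [LA, Metric.tendsto_atTop]
  intro η hη
  obtain ⟨y', ⟨w, rfl⟩, hy'⟩ := Metric.mem_closure_iff.mp hy (η / 3) (by positivity)
  have h1 : LA h (h * w * h) := by
    rw [mul_assoc]; exact (LA_self hh).mul _
  obtain ⟨N, hN⟩ := Metric.tendsto_atTop.mp h1 (η / 3) (by positivity)
  refine ⟨N, fun n hn => ?_⟩
  have h2 := hN n hn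
  rw [dist_eq_norm] at h2 hy' ⊢
  set f := fEps (1 / ((n : ℝ) + 1)) h
  have hfn : ‖f‖ ≤ 1 := fEps_norm _ _
  calc ‖f * y - y‖
      = ‖f * (y - h * w * h) + (f * (h * w * h) - h * w * h) - (y - h * w * h)‖ := by
        congr 1; noncomm_ring
    _ ≤ ‖f‖ * ‖y - h * w * h‖ + ‖f * (h * w * h) - h * w * h‖ + ‖y - h * w * h‖ := by
        refine (norm_sub_le _ _).trans ?_
        gcongr
        refine (norm_add_le _ _).trans ?_
        gcongr
        exact norm_mul_le _ _
    _ ≤ 1 * ‖y - h * w * h‖ + ‖f * (h * w * h) - h * w * h‖ + ‖y - h * w * h‖ := by gcongr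
    _ < η := by linarith

lemma le_of_unit {y g : B} (hy : 0 ≤ y) (hy1 : ‖y‖ ≤ 1) (hg : 0 ≤ g) (h : y * g = y) :
    y ≤ g ∧ g * y = y := by
  have hys := (IsSelfAdjoint.of_nonneg hy).star_eq
  have hgs := (IsSelfAdjoint.of_nonneg hg).star_eq
  have h' : g * y = y := by
    have := congrArg star h
    rwa [star_mul, hys, hgs] at this
  refine ⟨?_, h'⟩
  have hcomm : Commute (CFC.sqrt g) y := by
    rw [CFC.sqrt]
    exact Commute.cfcₙ_nnreal (show g * y = y * g by rw [h, h']) _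
  have hss : star (CFC.sqrt g) = CFC.sqrt g :=
    (IsSelfAdjoint.of_nonneg (CFC.sqrt_nonneg g)).star_eq
  have e1 : star (CFC.sqrt g) * y * CFC.sqrt g = y := by
    rw [hss, hcomm.eq, mul_assoc, CFC.sqrt_mul_sqrt_self g hg, h]
  have e2 := CStarAlgebra.star_left_conjugate_le_norm_smul (a := CFC.sqrt g) (b := y)
    (IsSelfAdjoint.of_nonneg hy)
  rw [e1, hss, CFC.sqrt_mul_sqrt_self g hg] at e2
  refine e2.trans ?_
  calc ‖y‖ • g ≤ (1 : ℝ) • g := smul_le_smul_of_nonneg_right hy1 hg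
    _ = g := one_smul _ _

lemma sq_le_of_contr {y : B} (hy : 0 ≤ y) (hy1 : ‖y‖ ≤ 1) : y * y ≤ y := by
  have hss : star (CFC.sqrt y) = CFC.sqrt y :=
    (IsSelfAdjoint.of_nonneg (CFC.sqrt_nonneg y)).star_eq
  have e2 := CStarAlgebra.star_left_conjugate_le_norm_smul (a := CFC.sqrt y) (b := y)
    (IsSelfAdjoint.of_nonneg hy)
  have e1 : CFC.sqrt y * y * CFC.sqrt y = y * y := by
    nth_rewrite 2 [← CFC.sqrt_mul_sqrt_self y hy]
    rw [mul_assoc, mul_assoc, CFC.sqrt_mul_sqrt_self y hy, ← mul_assoc,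
      CFC.sqrt_mul_sqrt_self y hy]
  rw [hss, e1, CFC.sqrt_mul_sqrt_self y hy] at e2
  refine e2.trans ?_
  calc ‖y‖ • y ≤ (1 : ℝ) • y := smul_le_smul_of_nonneg_right hy1 hy
    _ = y := one_smul _ _

lemma contr_of_sq_le {y : B} (hy : 0 ≤ y) (h : y * y ≤ y) : ‖y‖ ≤ 1 := by
  have hys := (IsSelfAdjoint.of_nonneg hy).star_eq
  have h0 : 0 ≤ y * y := by
    have := star_mul_self_nonneg y
    rwa [hys] at this
  have h1 := CStarAlgebra.norm_le_norm_of_nonneg_of_le h0 h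
  have h2 : ‖y * y‖ = ‖y‖ * ‖y‖ := by
    have := CStarRing.norm_star_mul_self (x := y)
    rwa [hys] at this
  rw [h2] at h1
  by_contra hc
  push Not at hc
  nlinarith

lemma add_contr {b c : B} (hb : 0 ≤ b) (hc : 0 ≤ c) (hb1 : ‖b‖ ≤ 1) (hc1 : ‖c‖ ≤ 1)
    (h : b * c = 0) (h' : c * b = 0) : ‖b + c‖ ≤ 1 := by
  apply contr_of_sq_le (add_nonneg hb hc)
  have : (b + c) * (b + c) = b * b + c * c := by
    rw [add_mul, mul_add, mul_add, h, h']; abel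
  rw [this]
  exact add_le_add (sq_le_of_contr hb hb1) (sq_le_of_contr hc hc1)

lemma fEps_mul_half {ε : ℝ} (hε : 0 < ε) (h : B) : fEps ε h * fEps (ε / 2) h = fEps ε h := by
  have hc := cutoff_cont ε
  have hc' := cutoff_cont (ε / 2)
  have h0 := cutoff_zero ε
  have h0' := cutoff_zero (ε / 2)
  rw [fEps, fEps, ← cfcₙ_mul (cutoff ε) (cutoff (ε / 2)) h]
  congr 1; funext t; exact cutoff_mul_half hε t

lemma half_eq (n : ℕ) : (1 / ((n : ℝ) + 1)) / 2 = 1 / (((2 * n + 1 : ℕ) : ℝ) + 1) := by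
  push_cast
  field_simp
  ring

lemma fs_mul (n : ℕ) (h : B) : fEps (1 / ((n : ℝ) + 1)) h *
    fEps (1 / (((2 * n + 1 : ℕ) : ℝ) + 1)) h = fEps (1 / ((n : ℝ) + 1)) h := by
  rw [← half_eq]; exact fEps_mul_half (eps_pos n) h

lemma fs_mul' (n : ℕ) (h : B) : fEps (1 / (((2 * n + 1 : ℕ) : ℝ) + 1)) h *
    fEps (1 / ((n : ℝ) + 1)) h = fEps (1 / ((n : ℝ) + 1)) h := by
  have := congrArg star (fs_mul n h)
  rwa [star_mul, fEps_star, fEps_star] at this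

end Generic2

section Traces

variable {B : Type*} [NonUnitalCStarAlgebra B] [PartialOrder B] [StarOrderedRing B]

lemma tau_mono_comm (τ : QuasiTrace B) {y g : B} (hy : 0 ≤ y) (h : y ≤ g) (hc : y * g = g * y) :
    τ.toFun y ≤ τ.toFun g := by
  have := τ.map_add_of_commute y (g - y) hy (sub_nonneg.mpr h) (by rw [mul_sub, sub_mul, hc])
  rw [add_sub_cancel] at this
  rw [this]; exact le_self_add

lemma tau_unit (τ : QuasiTrace B) {y g : B} (hy : 0 ≤ y) (hy1 : ‖y‖ ≤ 1) (hg : 0 ≤ g)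
    (h : y * g = y) : τ.toFun y ≤ τ.toFun g := by
  obtain ⟨h1, h2⟩ := le_of_unit hy hy1 hg h
  exact tau_mono_comm τ hy h1 (by rw [h, h2])

lemma tau_cfc_mono (τ : QuasiTrace B) {f g : ℝ → ℝ} (hf : Continuous f) (hg : Continuous g)
    (hf0 : f 0 = 0) (hg0 : g 0 = 0) {h : B} (hh : 0 ≤ h) (h0 : ∀ t, 0 ≤ t → 0 ≤ f t)
    (hfg : ∀ t, 0 ≤ t → f t ≤ g t) : τ.toFun (cfcₙ f h) ≤ τ.toFun (cfcₙ g h) := by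
  apply tau_mono_comm
  · exact cfcₙ_nonneg fun t ht => h0 t (quasispec_mem hh ht).1
  · exact cfcₙ_mono (fun t ht => hfg t (quasispec_mem hh ht).1) hf.continuousOn hg.continuousOn
      hf0 hg0
  · exact cfcₙ_commute_cfcₙ f g h

lemma tau_lsc (τ : QuasiTrace B) {c : ℕ → B} {d : B} (hc : ∀ n, 0 ≤ c n) (hd : 0 ≤ d)
    (hcd : Tendsto c atTop (𝓝 d)) {K : ℝ≥0∞} (hK : ∀ n, τ.toFun (c n) ≤ K) : τ.toFun d ≤ K := by
  by_contra hlt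
  push Not at hlt
  have h1 := τ.lowerSemicontinuousOn d hd K hlt
  have h2 : Tendsto c atTop (𝓝[{a : B | 0 ≤ a}] d) :=
    tendsto_nhdsWithin_iff.mpr ⟨hcd, Eventually.of_forall hc⟩
  obtain ⟨n, hn⟩ := (h2.eventually h1).exists
  exact absurd (hK n) (not_le.mpr hn)

lemma tau_fs_le (τ : QuasiTrace B) (n : ℕ) (h : B) :
    τ.toFun (fEps (1 / ((n : ℝ) + 1)) h) ≤ dTau τ h :=
  le_iSup (fun n : ℕ => τ.toFun (fEps (1 / ((n : ℝ) + 1)) h)) n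

lemma tau_le_dTau (τ : QuasiTrace B) {h c : B} (hc : 0 ≤ c) (hc1 : ‖c‖ ≤ 1)
    (hL : LA h c) : τ.toFun c ≤ dTau τ h := by
  have hcs := (IsSelfAdjoint.of_nonneg hc).star_eq
  have ht := hL.tendsto_conj (by rwa [hcs])
  have hpos : ∀ n : ℕ, 0 ≤ fEps (1 / ((n : ℝ) + 1)) h * c * fEps (1 / ((n : ℝ) + 1)) h := by
    intro n
    have := star_left_conjugate_nonneg hc (fEps (1 / ((n : ℝ) + 1)) h)
    rwa [fEps_star] at this
  refine tau_lsc τ hpos hc ht fun n => ?_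
  refine le_trans (tau_unit τ (hpos n) ?_ (fEps_nonneg _ _) ?_) (tau_fs_le τ (2 * n + 1) h)
  · have hf := fEps_norm (1 / ((n : ℝ) + 1)) h
    calc _ ≤ ‖fEps (1 / ((n : ℝ) + 1)) h‖ * ‖c‖ * ‖fEps (1 / ((n : ℝ) + 1)) h‖ :=
          (norm_mul_le _ _).trans (by gcongr; exact norm_mul_le _ _)
      _ ≤ 1 * 1 * 1 := by gcongr
      _ = 1 := by norm_num
  · rw [mul_assoc, fs_mul]

lemma LA_fEps {h c : B} (hc : 0 ≤ c) (hL : LA h c) {ε : ℝ} (hε : 0 < ε) : LA h (fEps ε c) := by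
  rw [(fEps_factor hε hc).2]; exact hL.mul _

lemma dTau_mono (τ : QuasiTrace B) {h c : B} (hc : 0 ≤ c) (hL : LA h c) :
    dTau τ c ≤ dTau τ h :=
  iSup_le fun n => tau_le_dTau τ (fEps_nonneg _ _) (fEps_norm _ _) (LA_fEps hc hL (eps_pos n))

lemma tau_fEps_swap (τ : QuasiTrace B) {ε : ℝ} (hε : 0 < ε) (x : B) :
    τ.toFun (fEps ε (star x * x)) = τ.toFun (fEps ε (x * star x)) := by
  have hp := star_mul_self_nonneg x
  have hq := mul_star_self_nonneg x
  set p := star x * x with hpdef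
  set q := x * star x with hqdef
  set s : ℝ → ℝ := fun t => Real.sqrt (cutdiv ε t) with hs
  have hsc : Continuous s := (cutdiv_cont hε).sqrt
  have hs0 : s 0 = 0 := by simp [hs, cutdiv_zero]
  have hss : cfcₙ s p * cfcₙ s p = cfcₙ (cutdiv ε) p := by
    rw [← cfcₙ_mul s s p hsc.continuousOn hs0 hsc.continuousOn hs0]
    congr 1; funext t; exact Real.mul_self_sqrt (cutdiv_nonneg hε t)
  have hcomm : p * cfcₙ s p = cfcₙ s p * p := intertwine hp hp rfl s hsc hs0
  have hintw : x * cfcₙ (cutdiv ε) p = cfcₙ (cutdiv ε) q * x :=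
    intertwine hp hq (by rw [hpdef, hqdef, mul_assoc]) _ (cutdiv_cont hε) (cutdiv_zero ε)
  have e1 : star (x * cfcₙ s p) * (x * cfcₙ s p) = fEps ε p := by
    rw [star_mul, cfcn_star, (fEps_factor hε hp).1, ← hss]
    calc cfcₙ s p * star x * (x * cfcₙ s p) = cfcₙ s p * (p * cfcₙ s p) := by
          simp only [hpdef, mul_assoc]
      _ = _ := by rw [hcomm, mul_assoc]
  have e2 : (x * cfcₙ s p) * star (x * cfcₙ s p) = fEps ε q := by
    rw [star_mul, cfcn_star, (fEps_factor hε hq).1]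
    calc x * cfcₙ s p * (cfcₙ s p * star x) = x * (cfcₙ s p * cfcₙ s p) * star x := by
          simp only [mul_assoc]
      _ = _ := by rw [hss, hintw, mul_assoc]
  rw [← e1, ← e2, τ.map_star_mul_self]

lemma dTau_swap (τ : QuasiTrace B) (x : B) : dTau τ (star x * x) = dTau τ (x * star x) :=
  iSup_congr fun n => tau_fEps_swap τ (eps_pos n) x

/-- matrix with a single entry -/
def mco (k l : Fin 2) (x : B) : Matrix (Fin 2) (Fin 2) B := fun i j => if i = k ∧ j = l then x else 0

lemma mco_mul_same (k l m : Fin 2) (x y : B) : mco k l x * mco l m y = mco k m (x * y) := by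
  ext i j
  fin_cases i <;> fin_cases j <;> fin_cases k <;> fin_cases l <;> fin_cases m <;>
    simp [mco, Matrix.mul_apply]

lemma mco_mul_ne (k l l' m : Fin 2) (h : l ≠ l') (x y : B) : mco k l x * mco l' m y = 0 := by
  ext i j
  fin_cases i <;> fin_cases j <;> fin_cases k <;> fin_cases l <;> fin_cases m <;> fin_cases l' <;>
    simp_all [mco, Matrix.mul_apply]

lemma mco_star (k l : Fin 2) (x : B) : star (mco k l x) = mco l k (star x) := by
  ext i j
  fin_cases i <;> fin_cases j <;> fin_cases k <;> fin_cases l <;>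
    simp [mco, Matrix.star_apply]

lemma mco_add (k l : Fin 2) (x y : B) : mco k l (x + y) = mco k l x + mco k l y := by
  ext i j
  simp only [mco, Matrix.add_apply]
  split_ifs <;> simp

lemma mco_sub (k l : Fin 2) (x y : B) : mco k l (x - y) = mco k l x - mco k l y := by
  ext i j
  simp only [mco, Matrix.sub_apply]
  split_ifs <;> simp

lemma abs_matrix {M : Type*} [NonUnitalRing M] [StarRing M] (r E Θ Ψ : M) (hrE : r * E = r)
    (hEs : star E = E) (hΘs : star Θ = Θ) (hΨs : star Ψ = Ψ)
    (hΨΨ : Ψ * Ψ = Θ + Θ - Θ * (r * star r) * Θ) :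
    star (Ψ * r) * (Ψ * r) * (E * E) = star (Ψ * r) * (Ψ * r) ∧
    E * E * (star (Ψ * r) * (Ψ * r)) = star (Ψ * r) * (Ψ * r) ∧
    ∃ Z, E * E - star (Ψ * r) * (Ψ * r) = star Z * Z := by
  have hEr : E * star r = star r := by
    have := congrArg star hrE
    rwa [star_mul, hEs] at this
  obtain ⟨T, hT⟩ : ∃ T, T = star r * Θ * r := ⟨_, rfl⟩
  have hTs : star T = T := by
    rw [hT, star_mul, star_mul, hΘs, star_star, mul_assoc]
  have hET : E * T = T := by rw [hT, ← mul_assoc, ← mul_assoc, hEr]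
  have hTE : T * E = T := by rw [hT, mul_assoc, hrE]
  have hH1 : star (Ψ * r) * (Ψ * r) = T + T - T * T := by
    have : star (Ψ * r) * (Ψ * r) = star r * (Ψ * Ψ) * r := by
      rw [star_mul, hΨs]; simp only [mul_assoc]
    rw [this, hΨΨ, hT]
    simp only [mul_add, mul_sub, add_mul, sub_mul, mul_assoc]
  have hHE : (T + T - T * T) * E = T + T - T * T := by
    rw [sub_mul, add_mul, mul_assoc, hTE]
  have hEH : E * (T + T - T * T) = T + T - T * T := by
    rw [mul_sub, mul_add, ← mul_assoc, hET]
  rw [hH1]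
  refine ⟨by rw [← mul_assoc, hHE, hHE], by rw [mul_assoc, hEH, hEH], E - T, ?_⟩
  rw [star_sub, hEs, hTs]
  simp only [mul_sub, sub_mul, hET, hTE]
  abel

set_option maxHeartbeats 1000000 in
lemma tau_matrix (τ : QuasiTrace B) {P Q d₁ d₂ : B} (h₁ : star d₁ = d₁) (h₂ : star d₂ = d₂)
    (hP : P * d₁ = P) (hQ : Q * d₂ = Q) {ε : ℝ} (hε : 0 < ε) :
    τ.toFun (fEps ε (P * star P + Q * star Q)) ≤ τ.toFun (d₁ * d₁) + τ.toFun (d₂ * d₂) := by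
  obtain ⟨σ, hσ, -, -, hadd, hstar⟩ := τ.exists_matrix_extension
  have hσ' : ∀ a : B, σ (mco 0 0 a) = τ.toFun a := hσ
  set s := P * star P + Q * star Q with hsdef
  have hs : 0 ≤ s := add_nonneg (mul_star_self_nonneg _) (mul_star_self_nonneg _)
  set θ := cfcₙ (cutdiv ε) s with hθ
  set φ := fEps ε s with hφ
  have hφ0 : 0 ≤ φ := fEps_nonneg _ _
  have hφ1 : ‖φ‖ ≤ 1 := fEps_norm _ _
  have hθs : θ * s = φ := (fEps_factor hε hs).1.symm
  have hsθ : s * θ = φ := (fEps_factor hε hs).2.symm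
  have hθstar : star θ = θ := cfcn_star _ _
  have hcd := cutdiv_cont hε
  have hcd0 := cutdiv_zero ε
  have hco := cutoff_cont ε
  have hco0 := cutoff_zero ε
  set u : ℝ → ℝ := fun t => Real.sqrt (cutdiv ε t + cutdiv ε t - cutoff ε t * cutdiv ε t) with hu
  have huc : Continuous u := by rw [hu]; fun_prop
  have hu0 : u 0 = 0 := by simp [hu, hcd0]
  set ψ := cfcₙ u s with hψ
  have hψstar : star ψ = ψ := cfcn_star _ _
  have hψψ : ψ * ψ = θ + θ - φ * θ := by
    rw [hψ, ← cfcₙ_mul u u s huc.continuousOn hu0 huc.continuousOn hu0]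
    have e : (fun t => u t * u t) =
        fun t => (cutdiv ε t + cutdiv ε t) - cutoff ε t * cutdiv ε t := by
      funext t
      apply Real.mul_self_sqrt
      nlinarith [cutdiv_nonneg hε t, cutoff_le_one ε t]
    rw [e, cfcₙ_sub (fun t => cutdiv ε t + cutdiv ε t) (fun t => cutoff ε t * cutdiv ε t) s,
      cfcₙ_add (cutdiv ε) (cutdiv ε) s, cfcₙ_mul (cutoff ε) (cutdiv ε) s, hφ, fEps]
  have hsψ : s * ψ = ψ * s := intertwine hs hs rfl u huc hu0
  have hψsψ : ψ * s * ψ = φ + φ - φ * φ := by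
    rw [mul_assoc, hsψ, ← mul_assoc, hψψ, sub_mul, add_mul, mul_assoc, hθs]
  -- matrices
  set r : Matrix (Fin 2) (Fin 2) B := mco 0 0 P + mco 0 1 Q with hr
  set E : Matrix (Fin 2) (Fin 2) B := mco 0 0 d₁ + mco 1 1 d₂ with hE
  have hrE : r * E = r := by
    simp only [hr, hE, add_mul, mul_add, mco_mul_same, hP, hQ,
      mco_mul_ne 0 0 1 1 (by decide), mco_mul_ne 0 1 0 0 (by decide), add_zero, zero_add]
  have hEs : star E = E := by simp only [hE, star_add, mco_star, h₁, h₂]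
  have hrr : r * star r = mco 0 0 s := by
    simp only [hr, star_add, mco_star, add_mul, mul_add, mco_mul_same,
      mco_mul_ne 0 0 1 0 (by decide), mco_mul_ne 0 1 0 0 (by decide), add_zero, zero_add, hsdef,
      mco_add]
  set Θ : Matrix (Fin 2) (Fin 2) B := mco 0 0 θ with hΘ
  set Ψ : Matrix (Fin 2) (Fin 2) B := mco 0 0 ψ with hΨ
  have hΘs : star Θ = Θ := by rw [hΘ, mco_star, hθstar]
  have hΨs : star Ψ = Ψ := by rw [hΨ, mco_star, hψstar]
  have hΨΨ : Ψ * Ψ = Θ + Θ - Θ * (r * star r) * Θ := by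
    rw [hrr, hΨ, hΘ, mco_mul_same, mco_mul_same, mco_mul_same, hψψ, mco_sub, mco_add, hθs]
  set H := star (Ψ * r) * (Ψ * r) with hH
  obtain ⟨hHE, hEH, Z, hZ⟩ := abs_matrix r E Θ Ψ hrE hEs hΘs hΨs hΨΨ
  rw [← hH] at hHE hEH hZ
  have hfin : σ (E * E) = σ H + σ (E * E - H) := by
    rw [← hadd H (E * E - H) ⟨_, rfl⟩ ⟨Z, hZ⟩ (by rw [mul_sub, sub_mul, hHE, hEH]),
      add_sub_cancel]
  have hσH : σ H = τ.toFun (φ + φ - φ * φ) := by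
    rw [hH, hstar, ← hσ']
    congr 1
    rw [star_mul, hΨs]
    calc Ψ * r * (star r * Ψ) = Ψ * (r * star r) * Ψ := by simp only [mul_assoc]
      _ = _ := by rw [hrr, hΨ, mco_mul_same, mco_mul_same, hψsψ]
  have hEE : E * E = mco 0 0 (d₁ * d₁) + mco 1 1 (d₂ * d₂) := by
    simp only [hE, add_mul, mul_add, mco_mul_same,
      mco_mul_ne 0 0 1 1 (by decide), mco_mul_ne 1 1 0 0 (by decide), add_zero, zero_add]
  have hσE : σ (E * E) = τ.toFun (d₁ * d₁) + τ.toFun (d₂ * d₂) := by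
    rw [hEE, hadd]
    · congr 1
      · exact hσ' _
      · have := hstar (mco 0 1 d₂)
        rw [mco_star, h₂, mco_mul_same, mco_mul_same] at this
        rw [this, hσ']
    · exact ⟨mco 0 0 d₁, by rw [mco_star, mco_mul_same, h₁]⟩
    · exact ⟨mco 1 1 d₂, by rw [mco_star, mco_mul_same, h₂]⟩
    · rw [mco_mul_ne 0 0 1 1 (by decide), mco_mul_ne 1 1 0 0 (by decide)]
  have hφle : φ ≤ φ + φ - φ * φ := by
    have := sq_le_of_contr hφ0 hφ1
    rw [add_sub_assoc]
    exact le_add_of_nonneg_right (sub_nonneg.mpr this)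
  calc τ.toFun φ ≤ τ.toFun (φ + φ - φ * φ) :=
        tau_mono_comm τ hφ0 hφle (by simp only [mul_add, mul_sub, add_mul, sub_mul, mul_assoc])
    _ = σ H := hσH.symm
    _ ≤ σ (E * E) := by rw [hfin]; exact le_self_add
    _ = _ := hσE

lemma tendsto_fEps {ε : ℝ} {s : ℕ → B} {s₀ : B} (h : Tendsto s atTop (𝓝 s₀))
    (hs : ∀ n, 0 ≤ s n) (hs₀ : 0 ≤ s₀) :
    Tendsto (fun n => fEps ε (s n)) atTop (𝓝 (fEps ε s₀)) := by
  have hn : ∀ᶠ n in atTop, ‖s n‖ < ‖s₀‖ + 1 :=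
    h.norm.eventually_lt_const (by linarith)
  refine Filter.Tendsto.cfcₙ (s := Set.Icc (0 : ℝ) (‖s₀‖ + 1)) isCompact_Icc (cutoff ε) h ?_ ?_ ?_ ?_
    (cutoff_cont ε).continuousOn (cutoff_zero ε)
  · filter_upwards [hn] with n hn t ht
    have := quasispec_mem (hs n) ht
    exact ⟨this.1, this.2.trans hn.le⟩
  · exact Eventually.of_forall fun n => IsSelfAdjoint.of_nonneg (hs n)
  · intro t ht
    have := quasispec_mem hs₀ ht
    exact ⟨this.1, this.2.trans (by linarith)⟩
  · exact IsSelfAdjoint.of_nonneg hs₀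

lemma dTau_add (τ : QuasiTrace B) {p q : B} (hp : 0 ≤ p) (hq : 0 ≤ q) :
    dTau τ (p + q) ≤ dTau τ p + dTau τ q := by
  have aux : ∀ {p : B}, 0 ≤ p → Tendsto (fun m : ℕ =>
      (CFC.sqrt p * fEps (1 / ((m : ℝ) + 1)) p) * star (CFC.sqrt p * fEps (1 / ((m : ℝ) + 1)) p))
      atTop (𝓝 p) := by
    intro p hp
    have hss : star (CFC.sqrt p) = CFC.sqrt p :=
      (IsSelfAdjoint.of_nonneg (CFC.sqrt_nonneg p)).star_eq
    have hL : LA p (CFC.sqrt p) := by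
      apply LA.of_mul_star
      rw [hss, CFC.sqrt_mul_sqrt_self p hp]; exact LA_self hp
    have h1 : Tendsto (fun m : ℕ => CFC.sqrt p * fEps (1 / ((m : ℝ) + 1)) p) atTop
        (𝓝 (CFC.sqrt p)) := by
      have := Filter.Tendsto.star hL
      simpa [fEps_star, hss] using this
    have h2 := h1.mul h1.star
    rwa [hss, CFC.sqrt_mul_sqrt_self p hp] at h2
  have aux2 : ∀ (p : B) (m : ℕ), τ.toFun (fEps (1 / (((2 * m + 1 : ℕ) : ℝ) + 1)) p *
      fEps (1 / (((2 * m + 1 : ℕ) : ℝ) + 1)) p) ≤ dTau τ p := by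
    intro p m
    refine le_trans ?_ (tau_fs_le τ (2 * m + 1) p)
    have h0 := fEps_nonneg (1 / (((2 * m + 1 : ℕ) : ℝ) + 1)) p
    apply tau_mono_comm
    · have := star_mul_self_nonneg (fEps (1 / (((2 * m + 1 : ℕ) : ℝ) + 1)) p)
      rwa [fEps_star] at this
    · exact sq_le_of_contr h0 (fEps_norm _ _)
    · rw [mul_assoc]
  refine iSup_le fun n => ?_
  have hlim := tendsto_fEps (ε := 1 / ((n : ℝ) + 1)) ((aux hp).add (aux hq))
    (fun m => add_nonneg (mul_star_self_nonneg _) (mul_star_self_nonneg _)) (add_nonneg hp hq)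
  refine tau_lsc τ (fun m => fEps_nonneg _ _) (fEps_nonneg _ _) hlim fun m => ?_
  refine (tau_matrix τ (fEps_star (1 / (((2 * m + 1 : ℕ) : ℝ) + 1)) p)
    (fEps_star (1 / (((2 * m + 1 : ℕ) : ℝ) + 1)) q) ?_ ?_ (eps_pos n)).trans
    (add_le_add (aux2 p m) (aux2 q m))
  · rw [mul_assoc, fs_mul]
  · rw [mul_assoc, fs_mul]

end Traces

section Ideals

variable {B : Type*} [NonUnitalCStarAlgebra B] [PartialOrder B] [StarOrderedRing B]

lemma dTau_sum (τ : QuasiTrace B) (x y : B) :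
    dTau τ (star (x + y) * (x + y)) ≤ dTau τ (star x * x) + dTau τ (star y * y) := by
  have hx := star_mul_self_nonneg x
  have hy := star_mul_self_nonneg y
  have hd := LA_self (add_nonneg hx hy)
  have h1 : LA (star x * x + star y * y) (star x) :=
    hd.of_le (by rw [star_star]; exact le_add_of_nonneg_right hy)
  have h2 : LA (star x * x + star y * y) (star y) :=
    hd.of_le (by rw [star_star]; exact le_add_of_nonneg_left hx)
  have h3 : LA (star x * x + star y * y) (star (x + y) * (x + y)) := by
    rw [star_add]; exact (h1.add h2).mul _
  exact (dTau_mono τ (star_mul_self_nonneg _) h3).trans (dTau_add τ hx hy)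

lemma quasi_inv (D : B) (h : ‖D‖ < 1) : ∃ Dq : B, Dq = D + D * Dq := by
  have h' : ‖(D : Unitization ℂ B)‖ < 1 := by rwa [Unitization.norm_inr]
  have hu := (Units.oneSub (D : Unitization ℂ B) h').mul_inv
  obtain ⟨v, hv⟩ : ∃ v : Unitization ℂ B,
      v = ((Units.oneSub (D : Unitization ℂ B) h')⁻¹ : (Unitization ℂ B)ˣ) := ⟨_, rfl⟩
  rw [← hv, Units.val_oneSub] at hu
  have e1 : v.fst = 1 := by
    have := congrArg (fun u : Unitization ℂ B => u.fst) hu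
    simpa [sub_eq_add_neg] using this
  have e2 := congrArg (fun u : Unitization ℂ B => u.snd) hu
  refine ⟨v.snd, ?_⟩
  simp [sub_eq_add_neg, e1] at e2
  have : v.snd - (D + D * v.snd) = 0 := by rw [← e2]; abel
  exact sub_eq_zero.mp this

lemma fEps_mem_pedersen {h : B} {ε : ℝ} (hε : 0 < ε) : fEps ε h ∈ pedersen B := by
  unfold pedersen pedersenIn
  simp only [Set.mem_iInter]
  rintro J ⟨hJ, hJd⟩
  obtain ⟨y, hy, hyg⟩ := Metric.mem_closure_iff.mp (hJd (Set.mem_univ (fEps (ε / 2) h))) 1 one_pos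
  rw [dist_eq_norm] at hyg
  obtain ⟨Dq, hDq⟩ := quasi_inv _ hyg
  have hf := fEps_mul_half hε h
  obtain ⟨f, hff⟩ : ∃ f, f = fEps ε h := ⟨_, rfl⟩
  obtain ⟨g, hg⟩ : ∃ g, g = fEps (ε / 2) h := ⟨_, rfl⟩
  rw [← hff]
  rw [← hff, ← hg] at hf
  rw [← hg] at hDq
  have key : f = f * y * (g + Dq * g) := by
    have e1 : f * Dq = f * (g - y) + f * (g - y) * Dq := by
      conv_lhs => rw [hDq]
      rw [mul_add, mul_assoc]
    rw [mul_sub, hf, sub_mul] at e1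
    have e2 : f * y + f * y * Dq = f := by
      have := sub_eq_zero.mpr e1
      rw [← sub_eq_zero, ← this]; abel
    calc f = (f * y + f * y * Dq) * g := by rw [e2, hf]
      _ = _ := by simp only [add_mul, mul_add, mul_assoc]
  rw [key]
  exact (hJ.2.2.2.2 _ (hJ.2.2.2.2 y hy f (Set.mem_univ _)).2 _ (Set.mem_univ _)).1

lemma tendsto_mul_fs (x : B) :
    Tendsto (fun n : ℕ => x * fEps (1 / ((n : ℝ) + 1)) (star x * x)) atTop (𝓝 x) := by
  have h := LA_star_mul x
  have := (continuous_star.tendsto _).comp h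
  rw [star_star] at this
  refine this.congr fun n => ?_
  simp only [Function.comp, star_mul, star_star, fEps_star]

/-- Elements with finite (or zero) dimension. -/
lemma dTau_mul_right (τ : QuasiTrace B) (x b : B) :
    dTau τ (star (x * b) * (x * b)) ≤ dTau τ (star x * x) := by
  rw [dTau_swap, dTau_swap τ x]
  apply dTau_mono τ (mul_star_self_nonneg _)
  rw [star_mul]
  simp only [mul_assoc]
  exact (LA_mul_star x).mul _

lemma dTau_mul_left (τ : QuasiTrace B) (x b : B) :
    dTau τ (star (b * x) * (b * x)) ≤ dTau τ (star x * x) := by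
  apply dTau_mono τ (star_mul_self_nonneg _)
  rw [star_mul]
  simp only [mul_assoc]
  exact (LA_star_mul x).mul _

lemma LA_fs_le (τ : QuasiTrace B) (n : ℕ) (h c : B) (hc : 0 ≤ c)
    (hL : fEps (1 / ((n : ℝ) + 1)) h * c = c) : dTau τ c ≤ τ.toFun (fEps (1 / ((n : ℝ) + 1)) h) := by
  refine iSup_le fun m => tau_unit τ (fEps_nonneg _ _) (fEps_norm _ _) (fEps_nonneg _ _) ?_
  have : fEps (1 / ((n : ℝ) + 1)) h * fEps (1 / ((m : ℝ) + 1)) c = fEps (1 / ((m : ℝ) + 1)) c := by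
    rw [(fEps_factor (eps_pos m) hc).2, ← mul_assoc, hL]
  have := congrArg star this
  rwa [star_mul, fEps_star, fEps_star] at this

lemma dTau_sq (τ : QuasiTrace B) {e : B} (he : 0 ≤ e) : dTau τ e ≤ dTau τ (star e * e) := by
  apply dTau_mono τ he
  have := LA_star_mul e
  rwa [(IsSelfAdjoint.of_nonneg he).star_eq] at this ⊢

lemma dTau_finite (τ : QuasiTrace B) {e : B} (he : 0 ≤ e) (hp : e ∈ pedersen B) :
    dTau τ e < ∞ := by
  refine (dTau_sq τ he).trans_lt ?_
  have : e ∈ {x : B | dTau τ (star x * x) < ∞} := by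
    unfold pedersen pedersenIn at hp
    simp only [Set.mem_iInter] at hp
    refine hp _ ⟨⟨Set.subset_univ _, ?_, ?_, ?_, ?_⟩, ?_⟩
    · have : dTau τ (0 : B) ≤ 0 := by
        refine iSup_le fun n => ?_
        rw [(fEps_factor (eps_pos n) le_rfl).1, mul_zero, τ.map_zero]
      simpa using lt_of_le_of_lt this ENNReal.zero_lt_top
    · intro x hx y hy
      exact (dTau_sum τ x y).trans_lt (ENNReal.add_lt_top.mpr ⟨hx, hy⟩)
    · intro x hx
      simpa using hx
    · intro x hx b _
      exact ⟨(dTau_mul_right τ x b).trans_lt hx, (dTau_mul_left τ x b).trans_lt hx⟩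
    · intro x _
      refine mem_closure_of_tendsto (tendsto_mul_fs x) (Eventually.of_forall fun n => ?_)
      refine lt_of_le_of_lt (LA_fs_le τ (2 * n + 1) (star x * x) _ (star_mul_self_nonneg _) ?_)
        (τ.finite_on_pedersen _ (fEps_mem_pedersen (h := star x * x) (eps_pos (2 * n + 1)))
          (fEps_nonneg _ _))
      rw [star_mul, fEps_star, mul_assoc (fEps _ _) (star x), ← mul_assoc (fEps _ _) (fEps _ _), fs_mul']
  exact this

lemma dTau_zero_of_tau (τ : QuasiTrace B) {h : B} (hh : 0 ≤ h) (h0 : τ.toFun h = 0) :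
    dTau τ h = 0 := by
  rw [← nonpos_iff_eq_zero]
  refine iSup_le fun n => ?_
  have hr : 0 < 2 / (1 / ((n : ℝ) + 1)) := div_pos two_pos (eps_pos n)
  have h1 : τ.toFun (fEps (1 / ((n : ℝ) + 1)) h) ≤
      τ.toFun (cfcₙ (fun t : ℝ => (2 / (1 / ((n : ℝ) + 1))) * t) h) := by
    refine tau_cfc_mono τ (cutoff_cont _) (by fun_prop) (cutoff_zero _) (by simp) hh
      (fun t _ => cutoff_nonneg _ t) fun t ht => ?_
    have : cutoff (1 / ((n : ℝ) + 1)) t ≤ max 0 (2 * t / (1 / ((n : ℝ) + 1)) - 1) := min_le_right _ _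
    refine this.trans (max_le (by positivity) ?_)
    have : 2 * t / (1 / ((n : ℝ) + 1)) = 2 / (1 / ((n : ℝ) + 1)) * t := by ring
    linarith
  rw [cfcₙ_const_mul _ (fun t : ℝ => t) h (by fun_prop), cfcn_id hh, τ.map_smul _ _ hr hh, h0,
    mul_zero] at h1
  exact h1

lemma tau_zero_of_dTau (τ : QuasiTrace B) {h : B} (hh : 0 ≤ h) (h0 : dTau τ h = 0) :
    τ.toFun h = 0 := by
  by_cases hz : h = 0
  · rw [hz, τ.map_zero]
  have hn : 0 < ‖h‖ := norm_pos_iff.mpr hz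
  have h1 : τ.toFun (‖h‖⁻¹ • h) ≤ dTau τ h := by
    refine tau_le_dTau τ (smul_nonneg (by positivity) hh) ?_ ?_
    · rw [norm_smul, norm_inv, norm_norm, inv_mul_cancel₀ hn.ne']
    · have := Tendsto.const_smul (LA_self hh) ‖h‖⁻¹
      simpa only [LA, mul_smul_comm] using this
  rw [h0, τ.map_smul _ _ (inv_pos.mpr hn) hh, nonpos_iff_eq_zero, mul_eq_zero] at h1
  rcases h1 with h1 | h1
  · rw [ENNReal.ofReal_eq_zero] at h1
    exact absurd h1 (not_le.mpr (inv_pos.mpr hn))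
  · exact h1

/-- The null space of a quasitrace is closed in the relevant sense. -/
lemma null_limit (τ : QuasiTrace B) {c : ℕ → B} {x : B} (hc : Tendsto c atTop (𝓝 x))
    (h0 : ∀ n, dTau τ (star (c n) * c n) = 0) : dTau τ (star x * x) = 0 := by
  apply dTau_zero_of_tau τ (star_mul_self_nonneg _)
  rw [← nonpos_iff_eq_zero]
  refine tau_lsc τ (c := fun n => star (c n) * c n) (fun n => star_mul_self_nonneg _)
    (star_mul_self_nonneg _) (hc.star.mul hc) fun n => ?_
  exact (tau_zero_of_dTau τ (star_mul_self_nonneg _) (h0 n)).le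

end Ideals

section Stab

variable {A W : Type*} [NonUnitalCStarAlgebra A] [PartialOrder A] [StarOrderedRing A]
  [NonUnitalCStarAlgebra W] [PartialOrder W] [StarOrderedRing W]

lemma emb_isometry (SB : Stabilization A W) (i j : ℕ) : Isometry (SB.emb i j) :=
  AddMonoidHomClass.isometry_of_norm _ (SB.norm_emb i j)

lemma emb_mul_same (SB : Stabilization A W) (i j k : ℕ) (a b : A) :
    SB.emb i j a * SB.emb j k b = SB.emb i k (a * b) := by
  rw [SB.emb_mul, if_pos rfl]

lemma emb_nonneg (SB : Stabilization A W) {a : A} (ha : 0 ≤ a) : 0 ≤ SB.emb 0 0 a := by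
  obtain ⟨z, rfl⟩ := CStarAlgebra.nonneg_iff_eq_star_mul_self.mp ha
  rw [← emb_mul_same SB 0 0 0, ← SB.emb_star]
  exact star_mul_self_nonneg _

lemma emb_corner (SB : Stabilization A W) (u v : A) (j : W) :
    ∃ a, SB.emb 0 0 a = SB.emb 0 0 u * j * SB.emb 0 0 v := by
  have hcl : IsClosed {j : W | SB.emb 0 0 u * j * SB.emb 0 0 v ∈ Set.range (SB.emb 0 0)} :=
    (emb_isometry SB 0 0).isClosedEmbedding.isClosed_range.preimage (by fun_prop)
  have hsub : (Submodule.span ℂ {w : W | ∃ (i j : ℕ) (a : A), w = SB.emb i j a} : Set W) ⊆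
      {j : W | SB.emb 0 0 u * j * SB.emb 0 0 v ∈ Set.range (SB.emb 0 0)} := by
    intro w hw
    induction hw using Submodule.span_induction with
    | mem x hx =>
      obtain ⟨i, j, a, rfl⟩ := hx
      simp only [Set.mem_ofPred_eq]
      rw [SB.emb_mul]
      split_ifs
      · rw [SB.emb_mul]
        split_ifs
        · exact ⟨_, rfl⟩
        · exact ⟨0, map_zero _⟩
      · rw [zero_mul]; exact ⟨0, map_zero _⟩
    | zero => exact ⟨0, by simp⟩
    | add x y _ _ hx hy =>
      obtain ⟨p, hp⟩ := hx
      obtain ⟨q, hq⟩ := hy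
      exact ⟨p + q, by rw [map_add, hp, hq, mul_add, add_mul]⟩
    | smul c x _ hx =>
      obtain ⟨p, hp⟩ := hx
      exact ⟨c • p, by rw [map_smul, hp, mul_smul_comm, smul_mul_assoc]⟩
  have := hcl.closure_subset_iff.mpr hsub
  rw [SB.dense_span.closure_eq] at this
  exact this (Set.mem_univ j)

lemma emb_mem_pedersen (SB : Stabilization A W) (halg : pedersen A = Set.univ) (h : A) :
    SB.emb 0 0 h ∈ pedersen W := by
  unfold pedersen pedersenIn
  simp only [Set.mem_iInter]
  rintro J ⟨hJ, hJd⟩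
  have hh : h ∈ pedersen A := by rw [halg]; exact Set.mem_univ _
  unfold pedersen pedersenIn at hh
  simp only [Set.mem_iInter] at hh
  refine hh {a | SB.emb 0 0 a ∈ J} ⟨⟨Set.subset_univ _, ?_, ?_, ?_, ?_⟩, ?_⟩
  · simpa using hJ.2.1
  · intro x hx y hy
    simpa using hJ.2.2.1 _ hx _ hy
  · intro x hx
    simpa using hJ.2.2.2.1 _ hx
  · intro x hx b _
    have := hJ.2.2.2.2 _ hx (SB.emb 0 0 b) (Set.mem_univ _)
    rwa [emb_mul_same, emb_mul_same] at this
  · intro x _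
    rw [Metric.mem_closure_iff]
    intro η hη
    have l1 := LA_iff.mp (LA_mul_star x)
    have l2 := tendsto_iff_norm_sub_tendsto_zero.mp (tendsto_mul_fs x)
    obtain ⟨n, h1, h2⟩ := ((l1.eventually_lt_const (show (0 : ℝ) < η / 4 by positivity)).and
      (l2.eventually_lt_const (show (0 : ℝ) < η / 4 by positivity))).exists
    have hu1 := fEps_norm (1 / ((n : ℝ) + 1)) (x * star x)
    have hv1 := fEps_norm (1 / ((n : ℝ) + 1)) (star x * x)
    obtain ⟨u, hu⟩ : ∃ u, u = fEps (1 / ((n : ℝ) + 1)) (x * star x) := ⟨_, rfl⟩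
    obtain ⟨v, hv⟩ : ∃ v, v = fEps (1 / ((n : ℝ) + 1)) (star x * x) := ⟨_, rfl⟩
    rw [← hu] at h1 hu1
    rw [← hv] at h2 hv1
    obtain ⟨j, hj, hjx⟩ := Metric.mem_closure_iff.mp (hJd (Set.mem_univ (SB.emb 0 0 x)))
      (η / 2) (by positivity)
    obtain ⟨a, ha⟩ := emb_corner SB u v j
    refine ⟨a, ?_, ?_⟩
    · change SB.emb 0 0 a ∈ J
      rw [ha]
      exact (hJ.2.2.2.2 _ (hJ.2.2.2.2 _ hj _ (Set.mem_univ _)).2 _ (Set.mem_univ _)).1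
    · rw [dist_eq_norm] at hjx ⊢
      have e1 : ‖u * x * v - a‖ ≤ η / 2 := by
        rw [← SB.norm_emb 0 0, map_sub, ← emb_mul_same SB 0 0 0, ← emb_mul_same SB 0 0 0, ha,
          ← sub_mul, ← mul_sub]
        have hU : ‖SB.emb 0 0 u‖ ≤ 1 := by rwa [SB.norm_emb]
        have hV : ‖SB.emb 0 0 v‖ ≤ 1 := by rwa [SB.norm_emb]
        calc _ ≤ ‖SB.emb 0 0 u‖ * ‖SB.emb 0 0 x - j‖ * ‖SB.emb 0 0 v‖ :=
              (norm_mul_le _ _).trans (by gcongr; exact norm_mul_le _ _)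
          _ ≤ 1 * (η / 2) * 1 := by gcongr
          _ = η / 2 := by ring
      have e2 : ‖u * x * v - x * v‖ ≤ η / 4 := by
        rw [← sub_mul]
        calc _ ≤ ‖u * x - x‖ * ‖v‖ := norm_mul_le _ _
          _ ≤ (η / 4) * 1 := by gcongr
          _ = _ := by ring
      have e3 : x - a = (u * x * v - a) - (u * x * v - x * v) - (x * v - x) := by abel
      rw [e3]
      have := norm_sub_le ((u * x * v - a) - (u * x * v - x * v)) (x * v - x)
      have := norm_sub_le (u * x * v - a) (u * x * v - x * v)
      linarith

/-- The norm of a quasitrace on `A`. -/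
def nrm (SB : Stabilization A W) (τ : QuasiTrace W) : ℝ≥0∞ :=
  ⨆ a : {a : A // 0 ≤ a ∧ ‖a‖ ≤ 1}, τ.toFun (SB.emb 0 0 a)

lemma nrm_lt_top (SB : Stabilization A W) (hσ : SigmaUnital A) (halg : pedersen A = Set.univ)
    (τ : QuasiTrace W) : nrm SB τ < ∞ := by
  obtain ⟨h, hh, hher⟩ := hσ
  refine lt_of_le_of_lt ?_ (dTau_finite τ (emb_nonneg SB hh) (emb_mem_pedersen SB halg h))
  refine iSup_le fun a => ?_
  obtain ⟨a, ha, ha1⟩ := a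
  refine tau_le_dTau τ (emb_nonneg SB ha) (by rwa [SB.norm_emb]) (LA_of_her (emb_nonneg SB hh) ?_)
  have : a ∈ her h := by rw [hher]; exact Set.mem_univ _
  refine map_mem_closure (emb_isometry SB 0 0).continuous this ?_
  rintro x ⟨y, rfl⟩
  exact ⟨SB.emb 0 0 y, by rw [emb_mul_same, emb_mul_same]⟩

lemma nrm_pos (SB : Stabilization A W) (τ : QuasiTrace W) (hτ : ¬ τ.IsZero) : nrm SB τ ≠ 0 := by
  intro h0
  apply hτ
  have h1 : ∀ a : A, 0 ≤ a → τ.toFun (SB.emb 0 0 a) = 0 := by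
    intro a ha
    by_cases hz : a = 0
    · rw [hz, map_zero, τ.map_zero]
    have hn : 0 < ‖a‖ := norm_pos_iff.mpr hz
    have hb : 0 ≤ ‖a‖⁻¹ • a := smul_nonneg (by positivity) ha
    have h2 : τ.toFun (SB.emb 0 0 (‖a‖⁻¹ • a)) ≤ 0 := by
      rw [← h0]
      refine le_iSup (fun a : {a : A // 0 ≤ a ∧ ‖a‖ ≤ 1} => τ.toFun (SB.emb 0 0 a))
        ⟨‖a‖⁻¹ • a, hb, ?_⟩
      rw [norm_smul, norm_inv, norm_norm, inv_mul_cancel₀ hn.ne']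
    have e : SB.emb 0 0 a = ‖a‖ • SB.emb 0 0 (‖a‖⁻¹ • a) := by
      rw [← LinearMap.map_smul_of_tower, smul_smul, mul_inv_cancel₀ hn.ne', one_smul]
    rw [e, τ.map_smul _ _ hn (emb_nonneg SB hb), nonpos_iff_eq_zero.mp h2, mul_zero]
  have h2 : ∀ x : W, x ∈ Submodule.span ℂ {w : W | ∃ (i j : ℕ) (a : A), w = SB.emb i j a} →
      dTau τ (star x * x) = 0 := by
    intro x hx
    induction hx using Submodule.span_induction with
    | mem x hx =>
      obtain ⟨i, j, a, rfl⟩ := hx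
      rw [SB.emb_star, emb_mul_same]
      have := dTau_swap τ (SB.emb 0 j a)
      rw [SB.emb_star, emb_mul_same, emb_mul_same] at this
      rw [this]
      exact dTau_zero_of_tau τ (emb_nonneg SB (mul_star_self_nonneg a)) (h1 _ (mul_star_self_nonneg a))
    | zero =>
      rw [mul_zero]; exact dTau_zero_of_tau τ le_rfl τ.map_zero
    | add x y _ _ hx hy =>
      have := dTau_sum τ x y
      rw [hx, hy, add_zero] at this
      exact nonpos_iff_eq_zero.mp this
    | smul c x _ hx =>
      have : dTau τ (star (c • x) * (c • x)) ≤ dTau τ (star x * x) := by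
        apply dTau_mono τ (star_mul_self_nonneg _)
        rw [star_smul, smul_mul_assoc, ← mul_smul_comm]
        exact (LA_star_mul x).mul _
      rw [hx] at this
      exact nonpos_iff_eq_zero.mp this
  intro a
  by_cases ha : 0 ≤ a
  swap
  · exact τ.zero_of_not_nonneg a ha
  obtain ⟨z, rfl⟩ := CStarAlgebra.nonneg_iff_eq_star_mul_self.mp ha
  obtain ⟨c, hc, hcz⟩ := mem_closure_iff_seq_limit.mp (SB.dense_span z)
  exact tau_zero_of_dTau τ ha (null_limit τ hcz fun n => h2 _ (hc n))

/-- Rescaling a quasitrace. -/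
def scaleQT (c : ℝ≥0∞) (hc : c ≠ ∞) (τ : QuasiTrace W) : QuasiTrace W where
  toFun a := c * τ.toFun a
  zero_of_not_nonneg a ha := by rw [τ.zero_of_not_nonneg a ha, mul_zero]
  map_zero := by rw [τ.map_zero, mul_zero]
  map_smul r a hr ha := by rw [τ.map_smul r a hr ha, mul_left_comm]
  map_add_of_commute a b ha hb h := by rw [τ.map_add_of_commute a b ha hb h, mul_add]
  map_star_mul_self x := by rw [τ.map_star_mul_self x]
  lowerSemicontinuousOn :=
    (ENNReal.continuous_const_mul hc).comp_lowerSemicontinuousOn τ.lowerSemicontinuousOn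
      (fun _ _ h => mul_le_mul_right h c)
  finite_on_pedersen a ha h := ENNReal.mul_lt_top hc.lt_top (τ.finite_on_pedersen a ha h)
  exists_matrix_extension := by
    obtain ⟨σ, h1, h2, h3, h4, h5⟩ := τ.exists_matrix_extension
    refine ⟨fun x => c * σ x, fun a => congrArg (c * ·) (h1 a),
      (congrArg (c * ·) h2).trans (mul_zero c), ?_, ?_, ?_⟩
    · intro r x hr hx
      exact (congrArg (c * ·) (h3 r x hr hx)).trans (mul_left_comm _ _ _)
    · intro x y hx hy h
      exact (congrArg (c * ·) (h4 x y hx hy h)).trans (mul_add _ _ _)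
    · intro x
      exact congrArg (c * ·) (h5 x)

lemma dTau_scale (c : ℝ≥0∞) (hc : c ≠ ∞) (τ : QuasiTrace W) (a : W) :
    dTau (scaleQT c hc τ) a = c * dTau τ a := by
  unfold dTau
  rw [ENNReal.mul_iSup]
  rfl

lemma cuntz_of_lt (SB : Stabilization A W)
    (hσ : SigmaUnital A) (halg : pedersen A = Set.univ)
    (hsc : StrictComparison W) (e a : W) (he : 0 ≤ e) (ha : 0 ≤ a)
    (hlt : ∀ τ ∈ closure (QTSet SB), dTau τ a < dTau τ e) : CuntzLE a e := by
  apply hsc a e ha he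
  intro τ hτ
  have hN := nrm_lt_top SB hσ halg τ
  have hN0 := nrm_pos SB τ hτ
  have hc : (nrm SB τ)⁻¹ ≠ ∞ := ENNReal.inv_ne_top.mpr hN0
  have hmem : scaleQT _ hc τ ∈ QTSet SB := by
    change (⨆ a : {a : A // 0 ≤ a ∧ ‖a‖ ≤ 1}, (nrm SB τ)⁻¹ * τ.toFun (SB.emb 0 0 a)) = 1
    rw [← ENNReal.mul_iSup]
    exact ENNReal.inv_mul_cancel hN0 hN.ne
  have := hlt _ (subset_closure hmem)
  rw [dTau_scale, dTau_scale] at this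
  by_contra hle
  exact absurd this (not_lt.mpr (mul_le_mul_right (not_lt.mp hle) _))

end Stab

section Rordam

variable {B : Type*} [NonUnitalCStarAlgebra B] [PartialOrder B] [StarOrderedRing B]

lemma rordam {a e : B} (ha : 0 ≤ a) (he : 0 ≤ e) (h : CuntzLE a e) {δ : ℝ} (hδ : 0 < δ) :
    ∃ x : B, star x * x = fEps δ a * fEps δ a ∧ LA e x := by
  obtain ⟨ys, hys⟩ := h
  obtain ⟨k, hk⟩ : ∃ k, k = cfcₙ (fun t => Real.sqrt (cutdiv (δ / 2) t)) a := ⟨_, rfl⟩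
  have hδ2 : 0 < δ / 2 := by positivity
  have hsc : Continuous (fun t => Real.sqrt (cutdiv (δ / 2) t)) :=
    Real.continuous_sqrt.comp (cutdiv_cont hδ2)
  have hs0 : Real.sqrt (cutdiv (δ / 2) 0) = 0 := by rw [cutdiv_zero, Real.sqrt_zero]
  have hks : star k = k := by rw [hk]; exact cfcn_star _ _
  have hkak : k * a * k = fEps (δ / 2) a := by
    have h1 : a * k = k * a := by rw [hk]; exact intertwine ha ha rfl _ hsc hs0
    rw [mul_assoc, h1, ← mul_assoc, (fEps_factor hδ2 ha).1]
    congr 1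
    rw [hk, ← cfcₙ_mul _ _ a hsc.continuousOn hs0 hsc.continuousOn hs0]
    congr 1
    funext t
    exact Real.mul_self_sqrt (cutdiv_nonneg hδ2 t)
  have hlim : Tendsto (fun n => ‖k‖ * ‖a - star (ys n) * e * ys n‖ * ‖k‖) atTop (𝓝 0) := by
    simpa using (hys.const_mul ‖k‖).mul_const ‖k‖
  obtain ⟨n, hn⟩ := (hlim.eventually_lt_const one_pos).exists
  obtain ⟨y, hy⟩ : ∃ y, y = ys n := ⟨_, rfl⟩
  rw [← hy] at hn
  have hD : ‖fEps (δ / 2) a - k * (star y * e * y) * k‖ < 1 := by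
    rw [← hkak, ← sub_mul, ← mul_sub]
    refine lt_of_le_of_lt ((norm_mul_le _ _).trans ?_) hn
    gcongr
    exact norm_mul_le _ _
  obtain ⟨Dq, hDq⟩ := quasi_inv _ hD
  have hf := fEps_mul_half hδ a
  have hfs := fEps_star δ a
  obtain ⟨f, hff⟩ : ∃ f, f = fEps δ a := ⟨_, rfl⟩
  obtain ⟨g, hg⟩ : ∃ g, g = fEps (δ / 2) a := ⟨_, rfl⟩
  rw [← hff] at hfs ⊢
  rw [← hff, ← hg] at hf
  rw [← hg] at hDq
  obtain ⟨c, hc⟩ : ∃ c, c = k * (star y * e * y) * k := ⟨_, rfl⟩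
  rw [← hc] at hDq
  have key : f * c + f * c * Dq = f := by
    have e1 : f * Dq = f * (g - c) + f * (g - c) * Dq := by
      conv_lhs => rw [hDq]
      rw [mul_add, mul_assoc]
    rw [mul_sub, hf, sub_mul] at e1
    have := sub_eq_zero.mpr e1
    rw [← sub_eq_zero, ← this]; abel
  have hes := (IsSelfAdjoint.of_nonneg he).star_eq
  obtain ⟨s, hs⟩ : ∃ s, s = e * y * k * f := ⟨_, rfl⟩
  obtain ⟨t, ht⟩ : ∃ t, t = y * k + y * k * Dq := ⟨_, rfl⟩
  have hst : star s * t = f := by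
    rw [← key, hs, ht, hc]
    simp only [star_mul, hfs, hks, hes, mul_add, mul_assoc]
  have hq0 := CFC.sqrt_nonneg (s * star s)
  have hqq := CFC.sqrt_mul_sqrt_self (s * star s) (mul_star_self_nonneg s)
  have hqs := (IsSelfAdjoint.of_nonneg hq0).star_eq
  obtain ⟨q, hq⟩ : ∃ q, q = CFC.sqrt (s * star s) := ⟨_, rfl⟩
  rw [← hq] at hqq hqs
  refine ⟨q * t, ?_, ?_⟩
  · calc star (q * t) * (q * t) = star t * (q * q) * t := by
          rw [star_mul, hqs]; simp only [mul_assoc]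
      _ = star (star s * t) * (star s * t) := by
          rw [hqq, star_mul, star_star]; simp only [mul_assoc]
      _ = f * f := by rw [hst, hfs]
  · apply LA.mul
    apply LA.of_mul_star
    rw [hqs, hqq, hs]
    simp only [mul_assoc]
    exact (LA_self he).mul _

end Rordam

section FinalAux

variable {B : Type*} [NonUnitalCStarAlgebra B] [PartialOrder B] [StarOrderedRing B]

lemma final_low (τ : QuasiTrace B) {a : B} (ha : 0 ≤ a) {ε η : ℝ} (hε : 0 < ε) (hη : 0 < η)
    (hη1 : η ≤ 1) :
    τ.toFun (fEps ε a) ≤ τ.toFun (fEps η (fEps (ε / 2) a * fEps (ε / 2) a)) := by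
  have hc := cutoff_cont (ε / 2)
  have h0 := cutoff_zero (ε / 2)
  have hF : fEps (ε / 2) a * fEps (ε / 2) a =
      cfcₙ (fun t => cutoff (ε / 2) t * cutoff (ε / 2) t) a :=
    (cfcₙ_mul _ _ a hc.continuousOn h0 hc.continuousOn h0).symm
  have hcc : Continuous (fun t => cutoff (ε / 2) t * cutoff (ε / 2) t) := hc.mul hc
  have hG : fEps η (cfcₙ (fun t => cutoff (ε / 2) t * cutoff (ε / 2) t) a) =
      cfcₙ (fun t => cutoff η (cutoff (ε / 2) t * cutoff (ε / 2) t)) a :=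
    (cfcₙ_comp' (cutoff η) (fun t => cutoff (ε / 2) t * cutoff (ε / 2) t) a
      (cutoff_cont η).continuousOn (cutoff_zero η) hcc.continuousOn (by simp [h0])
      (IsSelfAdjoint.of_nonneg ha)).symm
  rw [hF, hG]
  refine tau_cfc_mono τ (cutoff_cont _) ((cutoff_cont η).comp hcc) (cutoff_zero _)
    (by simp [h0, cutoff_zero]) ha (fun t _ => cutoff_nonneg _ t) fun t _ => ?_
  by_cases h : cutoff ε t = 0
  · rw [h]; exact cutoff_nonneg _ _
  · have h1 : cutoff (ε / 2) t = 1 := by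
      have := cutoff_mul_half hε t
      exact mul_left_cancel₀ h (by rw [this, mul_one])
    rw [Function.comp_apply, h1, mul_one, cutoff_eq_one hη hη1]
    exact cutoff_le_one _ _

lemma final_half (τ : QuasiTrace B) {a : B} (ha : 0 ≤ a) :
    τ.toFun (fEps 1 a) ≤ τ.toFun (fEps 1 (fEps (1 / 2) a)) := by
  have hG : fEps 1 (fEps (1 / 2) a) = cfcₙ (fun t => cutoff 1 (cutoff (1 / 2) t)) a :=
    (cfcₙ_comp' (cutoff 1) (cutoff (1 / 2)) a
      (cutoff_cont 1).continuousOn (cutoff_zero 1) (cutoff_cont _).continuousOn (cutoff_zero _)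
      (IsSelfAdjoint.of_nonneg ha)).symm
  rw [hG]
  refine tau_cfc_mono τ (cutoff_cont _) ((cutoff_cont 1).comp (cutoff_cont _)) (cutoff_zero _)
    (by simp [cutoff_zero]) ha (fun t _ => cutoff_nonneg _ t) fun t _ => ?_
  by_cases h : cutoff 1 t = 0
  · rw [h]; exact cutoff_nonneg _ _
  · rw [Function.comp_apply, cutoff_eq_one (show (0 : ℝ) < 1 / 2 by norm_num) (lt_of_cutoff_ne_zero one_pos h).le,
      cutoff_eq_one one_pos le_rfl]
    exact cutoff_le_one _ _

lemma mem_her_self {b : B} (hb : 0 ≤ b) : b ∈ her b :=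
  mem_her hb (LA_self hb) (by rw [(IsSelfAdjoint.of_nonneg hb).star_eq]; exact LA_self hb)

lemma mem_perp_her {b y : B} (h1 : y * b = 0) (h2 : b * y = 0) : y ∈ perp (her b) := by
  intro c hc
  have hcl : IsClosed {c : B | y * c = 0 ∧ c * y = 0} :=
    (isClosed_eq (by fun_prop) continuous_const).inter (isClosed_eq (by fun_prop) continuous_const)
  refine hcl.closure_subset_iff.mpr ?_ hc
  rintro _ ⟨w, rfl⟩
  refine ⟨?_, ?_⟩
  · rw [← mul_assoc, ← mul_assoc, h1, zero_mul, zero_mul]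
  · rw [mul_assoc, h2, mul_zero]

lemma fEps_mem_perp {C : Set B} {y : B} (hy : 0 ≤ y) (h : y ∈ perp C) {ε : ℝ} (hε : 0 < ε) :
    fEps ε y ∈ perp C := by
  intro c hc
  obtain ⟨h1, h2⟩ := h c hc
  refine ⟨?_, ?_⟩
  · rw [(fEps_factor hε hy).1, mul_assoc, h1, mul_zero]
  · rw [(fEps_factor hε hy).2, ← mul_assoc, h2, zero_mul]

lemma fEps_mem_her {e y : B} (he : 0 ≤ e) (hy : 0 ≤ y) (h : LA e y) {ε : ℝ} (hε : 0 < ε) :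
    fEps ε y ∈ her e :=
  mem_her he (LA_fEps hy h hε) (by rw [fEps_star]; exact LA_fEps hy h hε)

lemma final_main (S : Set (QuasiTrace B)) (e a : B) (he : 0 ≤ e)
    (hfin : ∀ τ : QuasiTrace B, dTau τ e < ∞) (ha : 0 ≤ a) (hω : omegaOn S a = 0)
    (hCu : CuntzLE a e) (ε : ℝ) (hε : 0 < ε) :
    ∃ b : B, b ∈ her e ∧ 0 ≤ b ∧ ‖b‖ ≤ 1 ∧
      (∀ τ ∈ S, dTau τ a < τ.toFun b + ENNReal.ofReal ε ∧ τ.toFun b ≤ dTau τ a) ∧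
      omegaOn S b < ENNReal.ofReal (ε / 2) ∧
      ∃ eC : B, eC ∈ perp (her b) ∩ her e ∧ 0 ≤ eC ∧
        ∀ τ ∈ S,
          dTau τ e ≤ dTau τ eC + dTau τ a ∧
          dTau τ eC ≤ tauOpenProj τ (perp (her b) ∩ her e) ∧
          tauOpenProj τ (perp (her b) ∩ her e) + dTau τ a < dTau τ e + ENNReal.ofReal ε := by
  have hε4 : 0 < ENNReal.ofReal (ε / 4) := ENNReal.ofReal_pos.mpr (by positivity)
  have hεlt : ENNReal.ofReal (ε / 4) < ENNReal.ofReal ε :=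
    (ENNReal.ofReal_lt_ofReal_iff hε).mpr (by linarith)
  rw [← hω] at hε4
  obtain ⟨n, hn⟩ := iInf_lt_iff.mp hε4
  have hna : ∀ τ ∈ S, dTau τ a ≤
      τ.toFun (fEps (1 / ((n : ℝ) + 1)) a) + ENNReal.ofReal (ε / 4) := by
    intro τ hτ
    rw [← tsub_le_iff_left]
    exact (le_iSup₂ (f := fun (τ : QuasiTrace B) (_ : τ ∈ S) =>
      dTau τ a - τ.toFun (fEps (1 / ((n : ℝ) + 1)) a)) τ hτ).trans hn.le
  obtain ⟨x, hx, hLx⟩ := rordam ha he hCu (half_pos (eps_pos n))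
  have hxx := mul_star_self_nonneg x
  have hLxx : LA e (x * star x) := hLx.mul _
  have hF : ∀ τ : QuasiTrace B, dTau τ (x * star x) ≤ dTau τ a := by
    intro τ
    rw [← dTau_swap]
    refine dTau_mono τ (star_mul_self_nonneg x) ?_
    rw [hx]
    exact (LA_fEps ha (LA_self ha) (half_pos (eps_pos n))).mul _
  have hlow : ∀ (τ : QuasiTrace B) {η : ℝ}, 0 < η → η ≤ 1 →
      τ.toFun (fEps (1 / ((n : ℝ) + 1)) a) ≤ τ.toFun (fEps η (x * star x)) := by
    intro τ η h0 h1
    rw [← tau_fEps_swap τ h0, hx]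
    exact final_low τ ha (eps_pos n) h0 h1
  have hhalf : (0 : ℝ) < 1 / 2 := by norm_num
  obtain ⟨b, hb⟩ : ∃ b, b = fEps (1 / 2) (x * star x) := ⟨_, rfl⟩
  obtain ⟨g, hg⟩ : ∃ g, g = fEps (1 / 2 / 2) (x * star x) := ⟨_, rfl⟩
  have hb0 : 0 ≤ b := by rw [hb]; exact fEps_nonneg _ _
  have hb1 : ‖b‖ ≤ 1 := by rw [hb]; exact fEps_norm _ _
  have hbs : star b = b := by rw [hb]; exact fEps_star _ _
  have hg0 : 0 ≤ g := by rw [hg]; exact fEps_nonneg _ _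
  have hgs : star g = g := by rw [hg]; exact fEps_star _ _
  have hbg : b * g = b := by rw [hb, hg]; exact fEps_mul_half hhalf _
  have hgb : g * b = b := by
    have := congrArg star hbg
    rwa [star_mul, hgs, hbs] at this
  have hLb : LA (x * star x) b := by rw [hb]; exact LA_fEps hxx (LA_self hxx) hhalf
  have hLg : LA (x * star x) g := by rw [hg]; exact LA_fEps hxx (LA_self hxx) (half_pos hhalf)
  have hLeb : LA e b := by rw [hb]; exact LA_fEps hxx hLxx hhalf
  have hLeg : LA e g := by rw [hg]; exact LA_fEps hxx hLxx (half_pos hhalf)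
  have hτb : ∀ τ : QuasiTrace B, τ.toFun b ≤ dTau τ a := fun τ =>
    (tau_le_dTau τ hb0 hb1 hLb).trans (hF τ)
  have hab : ∀ τ ∈ S, dTau τ a ≤ τ.toFun b + ENNReal.ofReal (ε / 4) := by
    intro τ hτ
    refine (hna τ hτ).trans (add_le_add_left ?_ _)
    rw [hb]; exact hlow τ hhalf (by norm_num)
  have hafin : ∀ τ ∈ S, τ.toFun b ≠ ∞ := by
    intro τ _
    exact ((tau_le_dTau τ hb0 hb1 hLeb).trans_lt (hfin τ)).ne
  refine ⟨b, mem_her he hLeb (by rwa [hbs]), hb0, hb1, fun τ hτ => ⟨?_, hτb τ⟩, ?_, ?_⟩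
  · exact (hab τ hτ).trans_lt (ENNReal.add_lt_add_left (hafin τ hτ) hεlt)
  · refine lt_of_le_of_lt ?_ ((ENNReal.ofReal_lt_ofReal_iff (half_pos hε)).mpr
      (show ε / 4 < ε / 2 by linarith))
    refine iInf_le_of_le 0 (iSup₂_le fun τ hτ => ?_)
    rw [tsub_le_iff_left]
    refine ((dTau_mono τ hb0 hLb).trans (hF τ)).trans ((hna τ hτ).trans (add_le_add_left ?_ _))
    have : (1 / (((0 : ℕ) : ℝ) + 1)) = 1 := by norm_num
    rw [this, hb]
    exact (hlow τ one_pos le_rfl).trans (final_half τ hxx)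
  · have hr0 := CFC.sqrt_nonneg e
    have hrr := CFC.sqrt_mul_sqrt_self e he
    have hrs := (IsSelfAdjoint.of_nonneg hr0).star_eq
    obtain ⟨r, hr⟩ : ∃ r, r = CFC.sqrt e := ⟨_, rfl⟩
    rw [← hr] at hrr hrs
    have hLr : LA e r := LA.of_mul_star (by rw [hrs, hrr]; exact LA_self he)
    obtain ⟨X, hX⟩ : ∃ X, X = r - r * g := ⟨_, rfl⟩
    have hXs : star X = r - g * r := by rw [hX, star_sub, star_mul, hrs, hgs]
    have hXb : X * b = 0 := by rw [hX, sub_mul, mul_assoc, hgb, sub_self]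
    have hbX : b * star X = 0 := by
      have := congrArg star hXb
      rwa [star_mul, hbs, star_zero] at this
    obtain ⟨c, hc⟩ : ∃ c, c = star X * X := ⟨_, rfl⟩
    have hc0 : 0 ≤ c := by rw [hc]; exact star_mul_self_nonneg _
    have hcs := (IsSelfAdjoint.of_nonneg hc0).star_eq
    have hLc : LA e c := by
      rw [hc, hXs]; exact (hLr.sub (hLeg.mul _)).mul _
    have hperp : c ∈ perp (her b) := by
      apply mem_perp_her
      · rw [hc, mul_assoc, hXb, mul_zero]
      · rw [hc, ← mul_assoc, hbX, zero_mul]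
    refine ⟨c, ⟨hperp, mem_her he hLc (by rwa [hcs])⟩, hc0, fun τ hτ => ⟨?_, ?_, ?_⟩⟩
    · have h1 := dTau_sum τ X (r * g)
      have h2 : X + r * g = r := by rw [hX, sub_add_cancel]
      rw [h2, hrs, hrr, ← hc] at h1
      refine h1.trans (add_le_add_right ?_ _)
      have h3 : LA g (star (r * g) * (r * g)) := by
        rw [star_mul, hgs]
        exact ((LA_self hg0).mul _).mul _
      exact ((dTau_mono τ (star_mul_self_nonneg _) h3).trans (dTau_mono τ hg0 hLg)).trans (hF τ)
    · refine iSup_le fun m => ?_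
      exact le_iSup (fun c : {c : B // c ∈ perp (her b) ∩ her e ∧ 0 ≤ c ∧ ‖c‖ ≤ 1} => τ.toFun c)
        ⟨fEps (1 / ((m : ℝ) + 1)) c, ⟨fEps_mem_perp hc0 hperp (eps_pos m),
          fEps_mem_her he hc0 hLc (eps_pos m)⟩, fEps_nonneg _ _, fEps_norm _ _⟩
    · have h1 : tauOpenProj τ (perp (her b) ∩ her e) + τ.toFun b ≤ dTau τ e := by
        unfold tauOpenProj
        have hne : Nonempty {c : B // c ∈ perp (her b) ∩ her e ∧ 0 ≤ c ∧ ‖c‖ ≤ 1} :=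
          ⟨⟨fEps 1 c, ⟨fEps_mem_perp hc0 hperp one_pos,
            fEps_mem_her he hc0 hLc one_pos⟩, fEps_nonneg _ _, fEps_norm _ _⟩⟩
        rw [ENNReal.iSup_add]
        refine iSup_le ?_
        rintro ⟨d, ⟨hd1, hd2⟩, hd0, hdn⟩
        obtain ⟨e1, e2⟩ := hd1 b (mem_her_self hb0)
        rw [← τ.map_add_of_commute d b hd0 hb0 (by rw [e1, e2])]
        exact tau_le_dTau τ (add_nonneg hd0 hb0) (add_contr hd0 hb0 hdn hb1 e1 e2)
          ((LA_of_her he hd2).add hLeb)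
      calc tauOpenProj τ (perp (her b) ∩ her e) + dTau τ a
          ≤ tauOpenProj τ (perp (her b) ∩ her e) + (τ.toFun b + ENNReal.ofReal (ε / 4)) :=
            add_le_add_right (hab τ hτ) _
        _ ≤ dTau τ e + ENNReal.ofReal (ε / 4) := by
            rw [← add_assoc]; exact add_le_add_left h1 _
        _ < _ := ENNReal.add_lt_add_left (hfin τ).ne hεlt

end FinalAux

/-- **Lemma.** Let `A` be a σ-unital algebraically simple C*-algebra with strict comparison
which is not purely infinite, and let `e, a ∈ Ped(A ⊗ K)₊` be contractions with `ω(a) = 0` and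
`d_τ(a) < d_τ(e)` on `\overline{QT(A)}^w`.  Then for every `ε > 0` there is a positive
contraction `b ∈ Her(e)` with: (1) `d_τ(a) - ε < τ(b) ≤ d_τ(a)`; (2) `ω(b) < ε/2`; and
(3) there is a positive `e_C ∈ Her(b)^⊥ ∩ Her(e)` with
`d_τ(e) - d_τ(a) ≤ d_τ(e_C) ≤ τ(q) < d_τ(e) - d_τ(a) + ε` for all `τ ∈ \overline{QT(A)}^w`,
where `τ(q) = sup {τ(c) : c ∈ (Her(b)^⊥ ∩ Her(e))₊, ‖c‖ ≤ 1}` is the value at the open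
projection associated with `Her(b)^⊥ ∩ Her(e)`. -/
theorem exists_tracially_large_subelement
    (SB : Stabilization A W)
    (hσ : SigmaUnital A) (hsimple : IsSimpleCStar A) (halg : pedersen A = Set.univ)
    (hsc : StrictComparison W) (hnpi : ¬ PurelyInfinite A)
    (e a : W) (he : 0 ≤ e) (hea : e ∈ pedersen W) (hecontr : ‖e‖ ≤ 1)
    (ha : 0 ≤ a) (haPed : a ∈ pedersen W) (hacontr : ‖a‖ ≤ 1)
    (hω : omegaOn (closure (QTSet SB)) a = 0)
    (hlt : ∀ τ ∈ closure (QTSet SB), dTau τ a < dTau τ e)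
    (ε : ℝ) (hε : 0 < ε) :
    ∃ b : W, b ∈ her e ∧ 0 ≤ b ∧ ‖b‖ ≤ 1 ∧
      (∀ τ ∈ closure (QTSet SB),
        dTau τ a < τ.toFun b + ENNReal.ofReal ε ∧ τ.toFun b ≤ dTau τ a) ∧
      omegaOn (closure (QTSet SB)) b < ENNReal.ofReal (ε / 2) ∧
      ∃ eC : W, eC ∈ perp (her b) ∩ her e ∧ 0 ≤ eC ∧
        ∀ τ ∈ closure (QTSet SB),
          dTau τ e ≤ dTau τ eC + dTau τ a ∧
          dTau τ eC ≤ tauOpenProj τ (perp (her b) ∩ her e) ∧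
          tauOpenProj τ (perp (her b) ∩ her e) + dTau τ a < dTau τ e + ENNReal.ofReal ε := by
  exact final_main _ e a he (fun τ => dTau_finite τ he hea) ha hω
    (cuntz_of_lt SB hσ halg hsc e a he ha hlt) ε hε

end Paper
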